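/- Let u ∈ 𝒪₀ be a unit in the ring of germs of holomorphic functions at 0 ∈ ℂⁿ and f ∈ 𝒪₀ with f(0) = 0 and finite Milnor number. Then the Jacobian ideals (∂(uf)/∂x₁,...,∂(uf)/∂xₙ) and (∂f/∂x₁,...,∂f/∂xₙ) have the same colength in 𝒪₀, i.e. μ(uf) = μ(f). -/

import Mathlib

/-!
Write `J = (∂₁f, …, ∂ₙf)` and `T = J + (f)`. The ideal `T` does not change when `f` is multiplied by
a unit, so it suffices to recover `dim 𝒪₀ ⧸ J` from `T`. This works because `J` is a reduction of
`T` and has as many generators as the dimension of `𝒪₀`, so that its colength is the Hilbert–Samuel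
multiplicity of `T`.

* Reduction (`pow_mem_of_constantCoeff_eq_zero`, `LocalCoords.exists_tju_pow_succ_le`): a function
  vanishing at the origin is integral over its Jacobian ideal, so `T ^ (N + 1) ≤ J * T ^ N`
  for some `N`. By the valuative criterion it suffices to look at arcs, on which the claim is
  that the order of `f` exceeds the order of its derivative by one. The criterion is proved for
  polynomials, where arcs come from Noether normalization and Dedekind domains; as `T` is
  `𝔪`-primary, `f` may be replaced by a Taylor polynomial.
* Multiplicity (`finrank_quotient_pow_le`, `LocalCoords.le_finrank_quotient_span_pow`): if `J` is
  `𝔪`-primary with `n` generators, then `dim 𝒪₀ ⧸ J ^ j` equals `dim 𝒪₀ ⧸ J` times the number of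
  monomials of degree `< j`. The upper bound is formal. The lower bound replaces the generators by
  polynomials with leading forms `xᵢ ^ D`, for which division with remainder makes `ℂ[x]` free over
  `ℂ[G]`, and compares the local contribution with the total one.
* Comparison (`LocalCoords.finrank_jac_le`): for another germ with the same `T` and Jacobian ideal
  `J'`, one gets `J' ^ (N + j) ≤ T ^ (N + j) ≤ J ^ j`. The two colengths are polynomials in `j` of
  the same degree with leading coefficients proportional to `dim 𝒪₀ ⧸ J'` and `dim 𝒪₀ ⧸ J`, which
  gives one inequality, and symmetry gives the other.

The algebra is carried out in any local ring with coordinates in the sense of `LocalCoords`, which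
applies to `𝒪₀` by Hadamard's lemma.
-/

set_option synthInstance.maxHeartbeats 1000000
set_option maxHeartbeats 1000000
open Filter Topology

noncomputable section

instance germAlgebra (n : ℕ) : Algebra ℂ (Filter.Germ (𝓝 (0 : Fin n → ℂ)) ℂ) :=
  RingHom.toAlgebra ((Filter.Germ.coeRingHom _).comp (Pi.constRingHom (Fin n → ℂ) ℂ))

/-- The ring `𝒪₀` of germs at `0` of holomorphic functions on `ℂⁿ`. -/
def holGerms (n : ℕ) : Subalgebra ℂ (Filter.Germ (𝓝 (0 : Fin n → ℂ)) ℂ) where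
  carrier := {G | ∃ f : (Fin n → ℂ) → ℂ, AnalyticAt ℂ f 0 ∧ G = ↑f}
  mul_mem' := by rintro _ _ ⟨f, hf, rfl⟩ ⟨g, hg, rfl⟩; exact ⟨f * g, hf.mul hg, rfl⟩
  add_mem' := by rintro _ _ ⟨f, hf, rfl⟩ ⟨g, hg, rfl⟩; exact ⟨f + g, hf.add hg, rfl⟩
  algebraMap_mem' := fun c => ⟨fun _ => c, analyticAt_const, rfl⟩

/-- The germ at `0` of an analytic function, as an element of `𝒪₀`. -/
def toO {n : ℕ} (f : (Fin n → ℂ) → ℂ) (hf : AnalyticAt ℂ f 0) : holGerms n :=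
  ⟨(↑f : Filter.Germ (𝓝 (0 : Fin n → ℂ)) ℂ), f, hf, rfl⟩

/-- The Jacobian ideal of `f` in `𝒪₀`. -/
def jacobianIdeal (n : ℕ) (f : (Fin n → ℂ) → ℂ) : Ideal (holGerms n) :=
  Ideal.span {G : holGerms n | ∃ i : Fin n,
    (G : Filter.Germ (𝓝 (0 : Fin n → ℂ)) ℂ) = ↑(fun z => fderiv ℂ f z (Pi.single i 1))}

/-- The Milnor number of `f`. -/
def milnorNumber (n : ℕ) (f : (Fin n → ℂ) → ℂ) : ℕ :=
  Module.finrank ℂ (holGerms n ⧸ jacobianIdeal n f)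

/-- A finite holomorphic map germ `(ℂⁿ,0) → (ℂⁿ,0)`. -/
def IsFiniteMapGerm (n : ℕ) (F : (Fin n → ℂ) → Fin n → ℂ) : Prop :=
  AnalyticAt ℂ F 0 ∧ F 0 = 0 ∧ ∀ᶠ z in 𝓝[≠] (0 : Fin n → ℂ), F z ≠ 0

/-- `V = {f = 0}` has (at worst) an isolated singularity at `0`. -/
def HasIsolatedSingularityAt (n : ℕ) (f : (Fin n → ℂ) → ℂ) : Prop :=
  ∀ᶠ z in 𝓝[≠] (0 : Fin n → ℂ), f z = 0 → fderiv ℂ f z ≠ 0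

/-! ### Derivatives along arcs -/

open Polynomial in
/-- The `X`-adic order of a polynomial is at least the order of its value at `π`. -/
theorem X_pow_dvd_of_dvd_aeval {V : Type*} [CommRing V] [IsDomain V] [Algebra ℂ V] {π : V}
    (h0 : π ≠ 0) (hu : ¬ IsUnit π) (k : ℕ) (p : ℂ[X]) (h : π ^ k ∣ aeval π p) : X ^ k ∣ p := by
  induction k generalizing p with
  | zero => simp
  | succ k ih =>
    have hp : p = X * p.divX + C (p.coeff 0) := (X_mul_divX_add p).symm
    have hc : p.coeff 0 = 0 := by
      by_contra hc
      have h1 : π ∣ aeval π p := (dvd_pow_self π (by omega)).trans h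
      rw [hp, map_add, map_mul, aeval_X, aeval_C, dvd_add_right (Dvd.intro _ rfl)] at h1
      exact hu (isUnit_of_dvd_unit h1 ((IsUnit.mk0 _ hc).map (algebraMap ℂ V)))
    rw [hc, C_0, add_zero] at hp
    rw [hp, map_mul, aeval_X, pow_succ', mul_dvd_mul_iff_left h0] at h
    rw [hp, pow_succ']
    exact mul_dvd_mul_left _ (ih _ h)

open Polynomial in
/-- When the residue field is `ℂ`, every element is a polynomial in `π` modulo `π ^ k`. -/
theorem exists_poly_approx {V : Type*} [CommRing V] [Algebra ℂ V] {π : V}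
    (hres : ∀ v : V, ∃ c : ℂ, π ∣ v - algebraMap ℂ V c) (k : ℕ) (v : V) :
    ∃ p : ℂ[X], π ^ k ∣ v - aeval π p := by
  induction k generalizing v with
  | zero => exact ⟨0, by simp⟩
  | succ k ih =>
    obtain ⟨c, w, hw⟩ := hres v
    obtain ⟨p, z, hp⟩ := ih w
    refine ⟨C c + X * p, z, ?_⟩
    simp only [map_add, map_mul, aeval_X, aeval_C]
    linear_combination hw + π * hp

theorem dvd_aeval_sub {V : Type*} [CommRing V] [Algebra ℂ V] {n : ℕ} {a : V} {x y : Fin n → V}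
    (h : ∀ i, a ∣ x i - y i) (q : MvPolynomial (Fin n) ℂ) :
    a ∣ MvPolynomial.aeval x q - MvPolynomial.aeval y q := by
  rw [← Ideal.mem_span_singleton, ← Ideal.Quotient.eq]
  have : ∀ z : Fin n → V, (Ideal.Quotient.mk (Ideal.span {a})) (MvPolynomial.aeval z q)
      = MvPolynomial.aeval (fun i => Ideal.Quotient.mkₐ ℂ (Ideal.span {a}) (z i)) q := by
    intro z
    rw [← Ideal.Quotient.mkₐ_eq_mk ℂ, ← MvPolynomial.comp_aeval_apply]
  rw [this, this]
  congr 2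
  ext i
  exact Ideal.Quotient.eq.2 (Ideal.mem_span_singleton.2 (h i))

open Polynomial in
/-- Chain rule along a polynomial arc. -/
theorem derivative_aeval_mv {n : ℕ} (ξ : Fin n → ℂ[X]) (q : MvPolynomial (Fin n) ℂ) :
    derivative (MvPolynomial.aeval ξ q) =
      ∑ i, MvPolynomial.aeval ξ (MvPolynomial.pderiv i q) * derivative (ξ i) := by
  induction q using MvPolynomial.induction_on with
  | C a => simp
  | add p q hp hq => simp [hp, hq, add_mul, Finset.sum_add_distrib]
  | mul_X p i hp =>
    have h1 : ∀ j, MvPolynomial.aeval ξ (MvPolynomial.pderiv j (p * MvPolynomial.X i))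
        * derivative (ξ j) = MvPolynomial.aeval ξ p * (if j = i then derivative (ξ j) else 0) +
          ξ i * (MvPolynomial.aeval ξ (MvPolynomial.pderiv j p) * derivative (ξ j)) := by
      intro j
      rw [Derivation.leibniz, MvPolynomial.pderiv_X, smul_eq_mul, smul_eq_mul, map_add, map_mul,
        map_mul, MvPolynomial.aeval_X]
      by_cases h : j = i
      · subst h; simp; ring
      · rw [Pi.single_eq_of_ne (Ne.symm h), if_neg h]; simp; ring
    rw [Finset.sum_congr rfl fun j _ => h1 j, Finset.sum_add_distrib, ← Finset.mul_sum,
      ← Finset.mul_sum, ← hp, Finset.sum_ite_eq' Finset.univ i]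
    rw [map_mul, derivative_mul, MvPolynomial.aeval_X, if_pos (Finset.mem_univ i)]
    ring

open Polynomial in
/-- Along an arc through a point of `{q = 0}`, the partial derivatives of `q` cannot all be
multiples of `q`: if `q` has order `e > 0` along the arc, then its derivative with respect to the
parameter has order `e - 1`, and it is a combination of the partial derivatives by the chain rule. The arc
takes values in a ring with uniformizer `π`, so it is first replaced by a polynomial arc
agreeing with it modulo `π ^ (e + 1)`. -/
theorem no_dvd_partials {V : Type*} [CommRing V] [IsDomain V] [Algebra ℂ V] {π : V}
    (h0 : π ≠ 0) (hu : ¬ IsUnit π) (hres : ∀ v : V, ∃ c : ℂ, π ∣ v - algebraMap ℂ V c)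
    {n : ℕ} (x : Fin n → V) (q : MvPolynomial (Fin n) ℂ) (e : ℕ)
    (he0 : e ≠ 0) (he : π ^ e ∣ MvPolynomial.aeval x q)
    (he' : ¬ π ^ (e + 1) ∣ MvPolynomial.aeval x q)
    (hd : ∀ i, MvPolynomial.aeval x q ∣ MvPolynomial.aeval x (MvPolynomial.pderiv i q)) :
    False := by
  choose ξ hξ using fun i => exists_poly_approx hres (e + 1) (x i)
  have key : ∀ r : MvPolynomial (Fin n) ℂ,
      π ^ (e+1) ∣ MvPolynomial.aeval x r - aeval π (MvPolynomial.aeval ξ r) := by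
    intro r
    rw [MvPolynomial.comp_aeval_apply ξ (aeval π : ℂ[X] →ₐ[ℂ] V)]
    exact dvd_aeval_sub hξ r
  have key' := fun r => (pow_dvd_pow π (Nat.le_succ e)).trans (key r)
  have h1 : X ^ e ∣ MvPolynomial.aeval ξ q :=
    X_pow_dvd_of_dvd_aeval h0 hu e _ ((dvd_iff_dvd_of_dvd_sub (key' q)).1 he)
  have h2 : ¬ X ^ (e + 1) ∣ MvPolynomial.aeval ξ q := by
    rintro ⟨s, hs⟩
    exact he' ((dvd_iff_dvd_of_dvd_sub (key q)).2 ⟨aeval π s, by simp [hs]⟩)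
  have h3 : X ^ e ∣ derivative (MvPolynomial.aeval ξ q) := by
    rw [derivative_aeval_mv]
    refine Finset.dvd_sum fun i _ => Dvd.dvd.mul_right ?_ _
    exact X_pow_dvd_of_dvd_aeval h0 hu e _
      ((dvd_iff_dvd_of_dvd_sub (key' _)).1 (he.trans (hd i)))
  obtain ⟨s, hs⟩ := h1
  obtain ⟨e, rfl⟩ := Nat.exists_eq_succ_of_ne_zero he0
  rw [hs, derivative_mul, dvd_add_left (Dvd.intro _ rfl), derivative_X_pow] at h3
  simp only [Nat.succ_eq_add_one, Nat.add_sub_cancel] at h3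
  rw [pow_succ, mul_comm (C _), mul_assoc, mul_dvd_mul_iff_left (pow_ne_zero _ X_ne_zero)] at h3
  apply h2
  rw [hs, pow_succ _ (e+1)]
  refine mul_dvd_mul_left _ ?_
  refine (IsUnit.dvd_mul_left (u := C ((e + 1 : ℕ) : ℂ)) ?_).1 h3
  exact isUnit_C.2 (IsUnit.mk0 _ (by exact_mod_cast (Nat.succ_ne_zero e)))

/-! ### Existence of arcs -/

/-- The properties of a discrete valuation ring with uniformizer `π` and residue field `ℂ` that are
needed of the target of an arc: a domain in which `π` is neither zero nor a unit, with every element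
congruent to a constant modulo `π`. -/
structure IsSmoothArc (V : Type) [CommRing V] [Algebra ℂ V] (π : V) : Prop where
  isDomain : IsDomain V
  ne_zero : π ≠ 0
  not_isUnit : ¬ IsUnit π
  residue : ∀ v : V, ∃ c : ℂ, π ∣ v - algebraMap ℂ V c

/-- The local ring of a Dedekind domain at a maximal ideal with residue field `ℂ` is an arc. -/
theorem exists_arc_of_dedekind {O : Type} [CommRing O] [IsDedekindDomain O] [Algebra ℂ O]
    (p : Ideal O) [p.IsMaximal] (hpbot : p ≠ ⊥)
    (hres : ∀ o : O, ∃ c : ℂ, o - algebraMap ℂ O c ∈ p) :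
    ∃ (V : Type) (_ : CommRing V) (_ : Algebra ℂ V) (π : V) (φ : O →ₐ[ℂ] V),
      IsSmoothArc V π ∧ (∀ a ∈ p, π ∣ φ a) ∧ ∀ q ≠ 0, ∃ K, ¬ π ^ K ∣ φ q := by
  have : IsDiscreteValuationRing (Localization.AtPrime p) :=
    IsLocalization.AtPrime.isDiscreteValuationRing_of_dedekind_domain O hpbot _
  obtain ⟨π, hπ⟩ := IsDiscreteValuationRing.exists_irreducible (Localization.AtPrime p)
  let φ : O →ₐ[ℂ] Localization.AtPrime p := IsScalarTower.toAlgHom ℂ O _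
  have hmem : ∀ v : Localization.AtPrime p,
      v ∈ IsLocalRing.maximalIdeal (Localization.AtPrime p) → π ∣ v := by
    intro v hv
    rwa [hπ.maximalIdeal_eq, Ideal.mem_span_singleton] at hv
  have hdiv : ∀ o : O, o ∈ p → π ∣ φ o := fun o ho => hmem _
    ((IsLocalization.AtPrime.to_map_mem_maximal_iff (Localization.AtPrime p) p o).2 ho)
  refine ⟨Localization.AtPrime p, inferInstance, inferInstance, π, φ,
    ⟨inferInstance, hπ.ne_zero, hπ.not_isUnit, ?_⟩, hdiv, ?_⟩
  · intro v
    obtain ⟨⟨o, s⟩, hos⟩ := IsLocalization.surj p.primeCompl v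
    obtain ⟨a, ha⟩ := hres o
    obtain ⟨b, hb⟩ := hres s
    have hb0 : b ≠ 0 := by
      rintro rfl
      exact s.2 (by simpa using hb)
    refine ⟨a / b, ?_⟩
    have hs : IsUnit (φ s) := IsLocalization.map_units _ s
    have hos' : v * φ s = φ o := hos
    rw [← hs.dvd_mul_right]
    have hab : algebraMap ℂ (Localization.AtPrime p) (a / b) * algebraMap ℂ _ b
        = algebraMap ℂ _ a := by
      rw [← map_mul, div_mul_cancel₀ _ hb0]
    have h1 : φ (o - algebraMap ℂ O a) = φ o - algebraMap ℂ _ a := by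
      rw [map_sub, AlgHom.commutes]
    have h2 : φ (s - algebraMap ℂ O b) = φ s - algebraMap ℂ _ b := by
      rw [map_sub, AlgHom.commutes]
    have h3 : (v - algebraMap ℂ _ (a / b)) * φ s =
        φ (o - algebraMap ℂ O a) - algebraMap ℂ _ (a / b) * φ (s - algebraMap ℂ O b) := by
      rw [h1, h2]
      linear_combination hos' - hab
    rw [h3]
    exact dvd_sub (hdiv _ ha) ((hdiv _ hb).mul_left _)
  · intro q hq
    have h0 : φ q ≠ 0 := fun h => hq
      (IsLocalization.injective (Localization.AtPrime p) p.primeCompl_le_nonZeroDivisors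
        (h.trans (map_zero _).symm))
    obtain ⟨K, hK⟩ := IsDiscreteValuationRing.associated_pow_irreducible h0 hπ
    refine ⟨K + 1, fun h => ?_⟩
    have := (hK.dvd_iff_dvd_right).1 h
    exact hπ.not_isUnit (isUnit_of_dvd_one ((mul_dvd_mul_iff_left (pow_ne_zero K hπ.ne_zero)).1
      (by rwa [mul_one, ← pow_succ])))

open Polynomial in
/-- Arcs on a curve: `A` is finite over `ℂ[X]`, and the arc is a local ring of the normalization of
`A` at a point over `P`. -/
theorem exists_arc_of_finite {A : Type} [CommRing A] [IsDomain A] [Algebra ℂ A] [Algebra ℂ[X] A]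
    [IsScalarTower ℂ ℂ[X] A] [Module.Finite ℂ[X] A] [FaithfulSMul ℂ[X] A]
    (P : Ideal A) [P.IsMaximal] (q : A) (hq : q ≠ 0) (hqP : q ∈ P) :
    ∃ (V : Type) (_ : CommRing V) (_ : Algebra ℂ V) (π : V) (φ : A →ₐ[ℂ] V),
      IsSmoothArc V π ∧ (∀ a ∈ P, π ∣ φ a) ∧ ∃ K, ¬ π ^ K ∣ φ q := by
  let L := FractionRing A
  let K := FractionRing ℂ[X]
  let : Algebra K L := FractionRing.liftAlgebra ℂ[X] L
  have : IsScalarTower ℂ[X] K L := FractionRing.isScalarTower_liftAlgebra _ _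
  have : FiniteDimensional K L := Module.Finite.of_isLocalization ℂ[X] A (nonZeroDivisors ℂ[X])
  let O := integralClosure ℂ[X] L
  have : IsDedekindDomain O := integralClosure.isDedekindDomain ℂ[X] K L
  have : Module.Finite ℂ[X] O := IsIntegralClosure.finite ℂ[X] K L O
  have : Algebra.IsIntegral ℂ[X] A := Algebra.IsIntegral.of_finite _ _
  let ι : A →ₐ[ℂ[X]] O := (IsScalarTower.toAlgHom ℂ[X] A L).codRestrict O
    (fun a => (Algebra.IsIntegral.isIntegral (R := ℂ[X]) a).map (IsScalarTower.toAlgHom ℂ[X] A L))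
  let : Algebra A O := ι.toRingHom.toAlgebra
  have : IsScalarTower ℂ[X] A O := IsScalarTower.of_algebraMap_eq fun x => (ι.commutes x).symm
  have hιinj : Function.Injective (algebraMap A O) := by
    intro a b hab
    exact IsFractionRing.injective A L (congrArg Subtype.val hab)
  have : Algebra.IsIntegral ℂ[X] O := Algebra.IsIntegral.of_finite _ _
  have : Algebra.IsIntegral A O := Algebra.IsIntegral.tower_top (R := ℂ[X])
  obtain ⟨p, hpmax, hp⟩ := Ideal.exists_ideal_over_maximal_of_isIntegral (S := O) P
    (by rw [(RingHom.injective_iff_ker_eq_bot _).1 hιinj]; exact bot_le)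
  have hqp : algebraMap A O q ∈ p := by rw [← Ideal.mem_comap, hp]; exact hqP
  have hq0 : algebraMap A O q ≠ 0 := fun h => hq (hιinj (by rw [h, map_zero]))
  have hpbot : p ≠ ⊥ := fun h => hq0 (by rw [h] at hqp; exact hqp)
  have : IsScalarTower ℂ ℂ[X] O := inferInstance
  have : Algebra.FiniteType ℂ O := Algebra.FiniteType.trans (S := ℂ[X]) inferInstance inferInstance
  let : Field (O ⧸ p) := Ideal.Quotient.field p
  have : Algebra.FiniteType ℂ (O ⧸ p) := inferInstance
  have : Module.Finite ℂ (O ⧸ p) := finite_of_finite_type_of_isJacobsonRing ℂ (O ⧸ p)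
  have hsurj : Function.Surjective (algebraMap ℂ (O ⧸ p)) :=
    (IsAlgClosed.algebraMap_bijective_of_isIntegral (k := ℂ)).2
  have hsurj' : ∀ o : O, ∃ c : ℂ, o - algebraMap ℂ O c ∈ p := by
    intro o
    obtain ⟨c, hc⟩ := hsurj (Ideal.Quotient.mk p o)
    exact ⟨c, Ideal.Quotient.eq.1 hc.symm⟩
  have hAO : ∀ c : ℂ, algebraMap A O (algebraMap ℂ A c) = algebraMap ℂ O c := by
    intro c
    rw [IsScalarTower.algebraMap_apply ℂ ℂ[X] A, ← IsScalarTower.algebraMap_apply ℂ[X] A O,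
      ← IsScalarTower.algebraMap_apply ℂ ℂ[X] O]
  let ψ : A →ₐ[ℂ] O := ⟨algebraMap A O, hAO⟩
  obtain ⟨V, _, _, π, φ, h1, h2, h3⟩ := exists_arc_of_dedekind p hpbot hsurj'
  refine ⟨V, inferInstance, inferInstance, π, φ.comp ψ, h1, fun a ha => h2 _ ?_, h3 _ hq0⟩
  rw [← hp] at ha
  exact ha

open Polynomial in
/-- Restriction of polynomials to the line through two distinct points, as a surjective map onto
the polynomial ring in one variable. -/
theorem exists_restrict_line {s : ℕ} (a b : Fin s → ℂ) (hab : b ≠ a) :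
    ∃ ψ : MvPolynomial (Fin s) ℂ →ₐ[ℂ] ℂ[X], Function.Surjective ψ ∧
      (∀ r, (ψ r).eval 0 = MvPolynomial.eval a r) ∧
      ∀ r, (ψ r).eval 1 = MvPolynomial.eval b r := by
  obtain ⟨i0, hi0⟩ : ∃ i, b i - a i ≠ 0 := by
    by_contra! h
    exact hab (funext fun i => sub_eq_zero.1 (h i))
  have hψeval : ∀ (t : ℂ) (r : MvPolynomial (Fin s) ℂ),
      (MvPolynomial.aeval (fun i => C (a i) + C (b i - a i) * X) r : ℂ[X]).eval t
        = MvPolynomial.eval (fun i => a i + (b i - a i) * t) r := by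
    intro t r
    have := MvPolynomial.comp_aeval_apply (fun i => C (a i) + C (b i - a i) * X)
      (Polynomial.aeval t : ℂ[X] →ₐ[ℂ] ℂ) r
    rw [Polynomial.coe_aeval_eq_eval] at this
    refine this.trans ?_
    rw [MvPolynomial.aeval_eq_eval]
    simp
  refine ⟨MvPolynomial.aeval fun i => C (a i) + C (b i - a i) * X, ?_, ?_, ?_⟩
  · intro p
    refine ⟨Polynomial.aeval (MvPolynomial.C (b i0 - a i0)⁻¹ *
      (MvPolynomial.X i0 - MvPolynomial.C (a i0))) p, ?_⟩
    rw [← Polynomial.aeval_algHom_apply]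
    simp only [map_mul, map_sub, MvPolynomial.aeval_X, MvPolynomial.aeval_C,
      Polynomial.algebraMap_eq, add_sub_cancel_left]
    rw [← C_sub, ← mul_assoc, ← C_mul, inv_mul_cancel₀ hi0, C_1, one_mul,
      Polynomial.aeval_X_left_apply]
  · intro r
    rw [hψeval]
    simp
  · intro r
    rw [hψeval]
    simp

open Polynomial in
/-- Arcs on a domain `A` finite over a polynomial ring. The image of `P` in affine space is joined
by a line to a point outside the image of `{q = 0}`; by going down, a component of the preimage of
this line passes through `P`, and it is a curve on which `q` does not vanish identically. -/
theorem exists_arc_of_finite_mv {A : Type} [CommRing A] [IsDomain A] [Algebra ℂ A] {s : ℕ}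
    [Algebra (MvPolynomial (Fin s) ℂ) A] [IsScalarTower ℂ (MvPolynomial (Fin s) ℂ) A]
    [Module.Finite (MvPolynomial (Fin s) ℂ) A] [FaithfulSMul (MvPolynomial (Fin s) ℂ) A]
    (P : Ideal A) [P.IsMaximal] (q : A) (hq : q ≠ 0) (hqP : q ∈ P) :
    ∃ (V : Type) (_ : CommRing V) (_ : Algebra ℂ V) (π : V) (φ : A →ₐ[ℂ] V),
      IsSmoothArc V π ∧ (∀ a ∈ P, π ∣ φ a) ∧ ∃ K, ¬ π ^ K ∣ φ q := by
  have : Algebra.IsIntegral (MvPolynomial (Fin s) ℂ) A := Algebra.IsIntegral.of_finite _ _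
  have hp0 : (P.under (MvPolynomial (Fin s) ℂ)).IsMaximal :=
    Ideal.isMaximal_comap_of_isIntegral_of_isMaximal (R := MvPolynomial (Fin s) ℂ) P
  obtain ⟨a, ha⟩ := (MvPolynomial.isMaximal_iff_eq_vanishingIdeal_singleton (K := ℂ)).1 hp0
  have hmem0 : ∀ r, algebraMap (MvPolynomial (Fin s) ℂ) A r ∈ P ↔ MvPolynomial.eval a r = 0 := by
    intro r
    rw [← Ideal.mem_comap]
    change r ∈ P.under _ ↔ _
    rw [ha, MvPolynomial.mem_vanishingIdeal_singleton_iff, MvPolynomial.aeval_eq_eval]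
  -- a nonzero polynomial lying in `(q)`: the line has to leave its zero set
  obtain ⟨N, hN, hN0⟩ := Submodule.exists_mem_ne_zero_of_ne_bot
    (Ideal.comap_ne_bot_of_integral_mem (R := MvPolynomial (Fin s) ℂ) (I := Ideal.span {q}) hq
      (Ideal.mem_span_singleton_self q) (Algebra.IsIntegral.isIntegral q))
  rw [Ideal.mem_comap] at hN
  obtain ⟨b, hb⟩ : ∃ b, MvPolynomial.eval b N ≠ 0 := by
    by_contra! h
    exact hN0 (MvPolynomial.funext fun x => by rw [h, map_zero])
  have hNa : MvPolynomial.eval a N = 0 :=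
    (hmem0 N).1 ((Ideal.span_singleton_le_iff_mem P).2 hqP hN)
  obtain ⟨ψ, hψsurj, hψ0, hψ1⟩ := exists_restrict_line a b (fun h => hb (h ▸ hNa))
  have : (RingHom.ker ψ).IsPrime := RingHom.ker_isPrime _
  have hle : RingHom.ker ψ ≤ P.under (MvPolynomial (Fin s) ℂ) := by
    intro r hr
    refine (hmem0 r).2 ?_
    rw [← hψ0, (RingHom.mem_ker).1 hr, Polynomial.eval_zero]
  obtain ⟨Q, hQP, hQprime, hQ⟩ :=
    Ideal.exists_ideal_le_liesOver_of_le (q := P.under (MvPolynomial (Fin s) ℂ)) P hle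
  have hQmem : ∀ r, algebraMap (MvPolynomial (Fin s) ℂ) A r ∈ Q ↔ ψ r = 0 := by
    intro r
    rw [← RingHom.mem_ker, hQ.over]
    rfl
  have hNQ : algebraMap (MvPolynomial (Fin s) ℂ) A N ∉ Q := by
    rw [hQmem]
    intro h
    apply hb
    rw [← hψ1, h, Polynomial.eval_zero]
  have hqQ : q ∉ Q := fun h => hNQ ((Ideal.span_singleton_le_iff_mem Q).2 h hN)
  let h : ℂ[X] →ₐ[ℂ] A ⧸ Q := AlgHom.liftOfSurjective ψ hψsurj
    ((Ideal.Quotient.mkₐ ℂ Q).comp (IsScalarTower.toAlgHom ℂ (MvPolynomial (Fin s) ℂ) A)) (by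
      intro r hr
      exact Ideal.Quotient.eq_zero_iff_mem.2 ((hQmem r).2 hr))
  have hcomp : ∀ r, h (ψ r) = Ideal.Quotient.mk Q (algebraMap (MvPolynomial (Fin s) ℂ) A r) := by
    intro r
    exact AlgHom.liftOfSurjective_apply _ _ _ _ _
  clear_value h
  have hinj : Function.Injective h := by
    rw [injective_iff_map_eq_zero]
    intro p hp
    obtain ⟨r, rfl⟩ := hψsurj p
    rw [hcomp] at hp
    exact (hQmem r).1 (Ideal.Quotient.eq_zero_iff_mem.1 hp)
  have hhfin : h.toRingHom.Finite := by
    have : (h.toRingHom.comp ψ.toRingHom).Finite := by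
      have e : h.toRingHom.comp ψ.toRingHom =
          (Ideal.Quotient.mk Q).comp (algebraMap (MvPolynomial (Fin s) ℂ) A) :=
        RingHom.ext hcomp
      rw [e]
      exact (RingHom.Finite.of_surjective _ Ideal.Quotient.mk_surjective).comp
        (RingHom.finite_algebraMap.2 inferInstance)
    exact RingHom.Finite.of_comp_finite this
  let _ : Algebra ℂ[X] (A ⧸ Q) := h.toRingHom.toAlgebra
  have : IsScalarTower ℂ ℂ[X] (A ⧸ Q) := IsScalarTower.of_algebraMap_eq fun c =>
    (h.commutes c).symm
  have : Module.Finite ℂ[X] (A ⧸ Q) := hhfin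
  have : FaithfulSMul ℂ[X] (A ⧸ Q) := (faithfulSMul_iff_algebraMap_injective _ _).2 hinj
  have hPmax : (P.map (Ideal.Quotient.mk Q)).IsMaximal := by
    refine (Ideal.map_eq_top_or_isMaximal_of_surjective _ Ideal.Quotient.mk_surjective
      ‹P.IsMaximal›).resolve_left fun htop => ?_
    have h1 := Ideal.comap_map_of_surjective _ (Ideal.Quotient.mk_surjective (I := Q)) P
    rw [htop, Ideal.comap_top, ← RingHom.ker_eq_comap_bot, Ideal.mk_ker, sup_of_le_left hQP] at h1
    exact Ideal.IsPrime.ne_top' h1.symm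
  obtain ⟨V, _, _, π, φ, h1, h2, h3⟩ := exists_arc_of_finite (P.map (Ideal.Quotient.mk Q))
    (Ideal.Quotient.mk Q q)
    (fun h => hqQ (Ideal.Quotient.eq_zero_iff_mem.1 h)) (Ideal.mem_map_of_mem _ hqP)
  exact ⟨V, inferInstance, inferInstance, π, φ.comp (Ideal.Quotient.mkₐ ℂ Q), h1,
    fun a ha => h2 _ (Ideal.mem_map_of_mem _ ha), h3⟩

/-- Every maximal ideal `P` of an affine domain carries an arc along which a given nonzero `q ∈ P`
does not vanish identically. Noether normalization reduces this to the finite case. -/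
theorem exists_arc {A : Type} [CommRing A] [IsDomain A] [Algebra ℂ A] [Algebra.FiniteType ℂ A]
    (P : Ideal A) [P.IsMaximal] (q : A) (hq : q ≠ 0) (hqP : q ∈ P) :
    ∃ (V : Type) (_ : CommRing V) (_ : Algebra ℂ V) (π : V) (φ : A →ₐ[ℂ] V),
      IsSmoothArc V π ∧ (∀ a ∈ P, π ∣ φ a) ∧ ∃ K, ¬ π ^ K ∣ φ q := by
  obtain ⟨s, g, hg, hgfin⟩ := exists_finite_inj_algHom_of_fg ℂ A
  let _ : Algebra (MvPolynomial (Fin s) ℂ) A := g.toRingHom.toAlgebra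
  have : IsScalarTower ℂ (MvPolynomial (Fin s) ℂ) A := IsScalarTower.of_algebraMap_eq fun c =>
    (g.commutes c).symm
  have : Module.Finite (MvPolynomial (Fin s) ℂ) A := hgfin
  have : FaithfulSMul (MvPolynomial (Fin s) ℂ) A := (faithfulSMul_iff_algebraMap_injective _ A).2 hg
  exact exists_arc_of_finite_mv (s := s) P q hq hqP

/-! ### Integrality over the Jacobian ideal -/

open MvPolynomial in
/-- A polynomial without constant term is integral over its Jacobian ideal `J`, at least near the
origin. In the algebra `A = ℂ[xᵢ, ∂ᵢq / q]` the ideal `P` generated by all `xᵢ` and `∂ᵢq / q` is the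
unit ideal, since an arc through a point of `V(P)` would make every `∂ᵢq` a multiple of `q`.
Clearing denominators in `1 ∈ P` gives the relation. -/
theorem pow_mem_of_constantCoeff_eq_zero {n : ℕ} (q : MvPolynomial (Fin n) ℂ)
    (hq0 : constantCoeff q = 0) (J T : Ideal (MvPolynomial (Fin n) ℂ))
    (hJ : J = Ideal.span (Set.range fun i => pderiv i q)) (hT : T = J ⊔ Ideal.span {q}) :
    ∃ N, q ^ (N + 1) ∈ idealOfVars (Fin n) ℂ * T ^ (N + 1) ⊔ J * T ^ N := by
  by_cases hq : q = 0
  · exact ⟨0, by simp [hq]⟩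
  have hqT : q ∈ T := hT ▸ Ideal.mem_sup_right (Ideal.mem_span_singleton_self q)
  have hJT : J ≤ T := hT ▸ le_sup_left
  have hdJ : ∀ i, pderiv i q ∈ J := fun i => hJ ▸ Ideal.subset_span ⟨i, rfl⟩
  let S := MvPolynomial (Fin n) ℂ
  let K := FractionRing S
  let ι := algebraMap S K
  have hι : Function.Injective ι := IsFractionRing.injective S K
  have hιq : ι q ≠ 0 := fun h => hq (hι (h.trans (map_zero _).symm))
  let gen : Fin n ⊕ Fin n → K := Sum.elim (fun i => ι (X i)) fun i => ι (pderiv i q) / ι q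
  let A : Subalgebra ℂ K := Algebra.adjoin ℂ (Set.range gen)
  have hfg : Algebra.FiniteType ℂ A :=
    A.fg_iff_finiteType.1 (Subalgebra.fg_def.2 ⟨_, Set.finite_range gen, rfl⟩)
  let genA : Fin n ⊕ Fin n → A := fun s => ⟨gen s, Algebra.subset_adjoin ⟨s, rfl⟩⟩
  let P : Ideal A := Ideal.span (Set.range genA)
  have hgenP : ∀ s, genA s ∈ P := fun s => Ideal.subset_span ⟨s, rfl⟩
  have hxA : ∀ r : S, ((aeval (fun i => genA (Sum.inl i)) r : A) : K) = ι r := by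
    intro r
    have h1 := comp_aeval_apply (fun i => genA (Sum.inl i)) A.val r
    have h2 := comp_aeval_apply (fun i => (X i : S)) (IsScalarTower.toAlgHom ℂ S K) r
    rw [aeval_X_left_apply] at h2
    exact h1.trans h2.symm
  -- an element of `A` is a fraction `t / q ^ N` with `t ∈ T ^ N`
  have hden : ∀ a ∈ A, ∃ N, ∃ t ∈ T ^ N, ι q ^ N * a = ι t := by
    intro a ha
    induction ha using Algebra.adjoin_induction with
    | mem x hx =>
      obtain ⟨s | s, rfl⟩ := hx
      · exact ⟨0, X s, by simp, by simp [gen]⟩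
      · exact ⟨1, pderiv s q, by simpa using hJT (hdJ s), by simp [gen, mul_div_cancel₀ _ hιq]⟩
    | algebraMap c => exact ⟨0, C c, by simp, by
        rw [pow_zero, one_mul, IsScalarTower.algebraMap_apply ℂ S K]; rfl⟩
    | add x y _ _ hx hy =>
      obtain ⟨N, t, ht, h1⟩ := hx
      obtain ⟨M, s, hs, h2⟩ := hy
      refine ⟨N + M, q ^ M * t + q ^ N * s, Ideal.add_mem _ ?_ ?_, ?_⟩
      · rw [add_comm N, pow_add]; exact Ideal.mul_mem_mul (Ideal.pow_mem_pow hqT M) ht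
      · rw [pow_add]; exact Ideal.mul_mem_mul (Ideal.pow_mem_pow hqT N) hs
      · rw [map_add, map_mul, map_mul, map_pow, map_pow, ← h1, ← h2]; ring
    | mul x y _ _ hx hy =>
      obtain ⟨N, t, ht, h1⟩ := hx
      obtain ⟨M, s, hs, h2⟩ := hy
      refine ⟨N + M, t * s, ?_, ?_⟩
      · rw [pow_add]; exact Ideal.mul_mem_mul ht hs
      · rw [map_mul, ← h1, ← h2]; ring
  let W : ℕ → Ideal S := fun N => idealOfVars (Fin n) ℂ * T ^ (N + 1) ⊔ J * T ^ N
  have hW : ∀ N M, ∀ w ∈ W N, q ^ M * w ∈ W (N + M) := by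
    intro N M w hw
    have h1 : q ^ M * w ∈ T ^ M * W N := Ideal.mul_mem_mul (Ideal.pow_mem_pow hqT M) hw
    have h2 : T ^ M * W N = W (N + M) := by
      simp only [W, ← Ideal.add_eq_sup]
      ring
    rwa [h2] at h1
  -- the numerators of the elements of `P` lie in `W`
  have hdenP : ∀ a ∈ P, ∃ N, ∃ w ∈ W N, ι q ^ (N + 1) * (a : K) = ι w := by
    intro a ha
    induction ha using Submodule.span_induction with
    | mem x hx =>
      obtain ⟨s | s, rfl⟩ := hx
      · refine ⟨0, X s * q, Ideal.mem_sup_left (Ideal.mul_mem_mul ?_ (by simpa using hqT)), ?_⟩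
        · exact Ideal.subset_span ⟨s, rfl⟩
        · simp [genA, gen, mul_comm]
      · exact ⟨0, pderiv s q, Ideal.mem_sup_right (by simpa using hdJ s),
          by simp [genA, gen, mul_div_cancel₀ _ hιq]⟩
    | zero => exact ⟨0, 0, Ideal.zero_mem _, by simp⟩
    | add x y _ _ hx hy =>
      obtain ⟨N, t, ht, h1⟩ := hx
      obtain ⟨M, s, hs, h2⟩ := hy
      refine ⟨N + M, q ^ M * t + q ^ N * s, Ideal.add_mem _ (hW _ _ _ ht) ?_, ?_⟩
      · rw [add_comm]; exact hW _ _ _ hs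
      · rw [map_add, map_mul, map_mul, map_pow, map_pow, ← h1, ← h2, Subalgebra.coe_add]; ring
    | smul a x _ hx =>
      obtain ⟨N, t, ht, h1⟩ := hx
      obtain ⟨M, s, hs, h2⟩ := hden a a.2
      refine ⟨N + M, s * t, ?_, ?_⟩
      · have h3 : s * t ∈ T ^ M * W N := Ideal.mul_mem_mul hs ht
        have h4 : T ^ M * W N = W (N + M) := by
          simp only [W, ← Ideal.add_eq_sup]
          ring
        rwa [h4] at h3
      · rw [smul_eq_mul, Subalgebra.coe_mul, map_mul, ← h1, ← h2]; ring
  by_cases htop : P = ⊤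
  · obtain ⟨N, w, hw, h⟩ := hdenP 1 (htop ▸ Submodule.mem_top)
    refine ⟨N, ?_⟩
    rw [OneMemClass.coe_one, mul_one, ← map_pow] at h
    rw [hι h]
    exact hw
  · exfalso
    obtain ⟨M, hM, hPM⟩ := Ideal.exists_le_maximal P htop
    have hqM : aeval (fun i => genA (Sum.inl i)) q ∈ M := by
      have h1 : q ∈ idealOfVars (Fin n) ℂ := by
        rw [← pow_one (idealOfVars (Fin n) ℂ), mem_pow_idealOfVars_iff']
        intro x hx
        have : x = 0 := by
          rw [← Finsupp.degree_eq_zero_iff]; omega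
        rw [this, ← constantCoeff_eq, hq0]
      have h2 : idealOfVars (Fin n) ℂ ≤
          M.comap (aeval (fun i => genA (Sum.inl i)) : S →ₐ[ℂ] A) := by
        refine Ideal.span_le.2 ?_
        rintro _ ⟨i, rfl⟩
        change aeval _ (X i) ∈ M
        rw [aeval_X]
        exact hPM (hgenP _)
      exact h2 h1
    have hqA : (aeval (fun i => genA (Sum.inl i)) q : A) ≠ 0 := by
      intro h
      apply hιq
      rw [← hxA, h, ZeroMemClass.coe_zero]
    obtain ⟨V, _, _, π, φ, hV, hφ, hK⟩ := exists_arc M _ hqA hqM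
    have := hV.isDomain
    have hcomp : ∀ r, φ (aeval (fun i => genA (Sum.inl i)) r) =
        aeval (fun i => φ (genA (Sum.inl i))) r := comp_aeval_apply _ φ
    classical
    obtain ⟨e, he0, he, he'⟩ : ∃ e, e ≠ 0 ∧ π ^ e ∣ φ (aeval (fun i => genA (Sum.inl i)) q) ∧
        ¬ π ^ (e + 1) ∣ φ (aeval (fun i => genA (Sum.inl i)) q) := by
      have hspec := Nat.find_spec hK
      have h1 : Nat.find hK ≠ 0 := fun h => by
        rw [h, pow_zero] at hspec
        exact hspec (one_dvd _)
      have h2 : Nat.find hK ≠ 1 := fun h => by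
        rw [h, pow_one] at hspec
        exact hspec (hφ _ hqM)
      refine ⟨Nat.find hK - 1, by omega, not_not.1 (Nat.find_min hK (by omega)), ?_⟩
      rwa [show Nat.find hK - 1 + 1 = Nat.find hK by omega]
    rw [hcomp] at he he'
    refine no_dvd_partials hV.ne_zero hV.not_isUnit hV.residue _ q e he0 he he' fun i =>
      ⟨φ (genA (Sum.inr i)), ?_⟩
    rw [← hcomp, ← hcomp, ← map_mul]
    congr 1
    apply Subtype.ext
    rw [Subalgebra.coe_mul, hxA, hxA]
    simp [genA, gen, mul_div_cancel₀ _ hιq]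

/-! ### Upper bound for the colength of powers -/

/-- The exponents `α ∈ ℕⁿ` with `|α| < j`. -/
def lowExponents (n j : ℕ) : Finset (Fin n → ℕ) :=
  (Fintype.piFinset fun _ => Finset.range j).filter fun α => ∑ i, α i < j

theorem mem_lowExponents {n j : ℕ} {α : Fin n → ℕ} : α ∈ lowExponents n j ↔ ∑ i, α i < j := by
  simp only [lowExponents, Finset.mem_filter, Fintype.mem_piFinset, Finset.mem_range,
    and_iff_right_iff_imp]
  intro h i
  exact (Finset.single_le_sum (fun _ _ => Nat.zero_le _) (Finset.mem_univ i)).trans_lt h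

theorem card_lowExponents_le (n j : ℕ) : (lowExponents n j).card ≤ j ^ n :=
  (Finset.card_filter_le _ _).trans (by simp)

theorem card_lowExponents_pos (n j : ℕ) : 0 < (lowExponents n (j + 1)).card :=
  Finset.card_pos.2 ⟨0, mem_lowExponents.2 (by simp)⟩

section Upper

variable {R : Type*} [CommRing R] [Algebra ℂ R] {n : ℕ}

/-- The products of representatives of a basis of `R ⧸ L` with the monomials of degree `j` in `g`
span `L ^ j` modulo `L ^ (j + 1)`. -/
theorem pow_le_span_sup_pow (L : Ideal R) (g : Fin n → R) (hg : ∀ i, g i ∈ L)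
    (hL : L ≤ Ideal.span (Set.range g) ⊔ L ^ 2) {c : ℕ} (e : Fin c → R)
    (he : Submodule.span ℂ (Set.range e) ⊔ L.restrictScalars ℂ = ⊤) (j : ℕ) :
    (L ^ j).restrictScalars ℂ ≤
      Submodule.span ℂ {r | ∃ b, ∃ α : Fin n → ℕ, ∑ i, α i = j ∧ r = e b * ∏ i, g i ^ α i} ⊔
        (L ^ (j + 1)).restrictScalars ℂ := by
  induction j with
  | zero =>
    rw [zero_add, pow_one]
    refine le_top.trans (he.symm.le.trans (sup_le_sup_right ?_ _))
    refine Submodule.span_mono ?_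
    rintro _ ⟨b, rfl⟩
    exact ⟨b, 0, by simp, by simp⟩
  | succ j ih =>
    have h1 : L ^ (j + 1) ≤ Ideal.span (Set.range g) * L ^ j ⊔ L ^ (j + 1 + 1) := by
      have := Ideal.mul_mono_left (K := L ^ j) hL
      rw [Ideal.sup_mul, ← pow_add, ← pow_succ'] at this
      rwa [show j + 1 + 1 = 2 + j by ring]
    have h2 : ∀ r ∈ L ^ j, ∀ i, g i * r ∈ Submodule.span ℂ
        {r | ∃ b, ∃ α : Fin n → ℕ, ∑ i, α i = j + 1 ∧ r = e b * ∏ i, g i ^ α i} ⊔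
        (L ^ (j + 1 + 1)).restrictScalars ℂ := by
      intro r hr i
      obtain ⟨y, hy, z, hz, rfl⟩ := Submodule.mem_sup.1 (ih hr)
      rw [mul_add]
      refine Submodule.add_mem_sup ?_ ?_
      · clear hr
        induction hy using Submodule.span_induction with
        | mem x hx =>
          obtain ⟨b, α, hα, rfl⟩ := hx
          refine Submodule.subset_span ⟨b, α + Pi.single i 1, ?_, ?_⟩
          · simp [Finset.sum_add_distrib, hα]
          · have h3 : ∏ k, g k ^ (Pi.single i 1 : Fin n → ℕ) k = g i := by
              rw [Finset.prod_eq_single i]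
              · simp
              · intro k _ hk; simp [hk]
              · simp
            simp only [Pi.add_apply, pow_add, Finset.prod_mul_distrib, h3]
            ring
        | zero => rw [mul_zero]; exact Submodule.zero_mem _
        | add x y _ _ hx hy => rw [mul_add]; exact Submodule.add_mem _ hx hy
        | smul a x _ hx => rw [mul_smul_comm]; exact Submodule.smul_mem _ _ hx
      · change g i * z ∈ L ^ (j + 1 + 1)
        rw [pow_succ']
        exact Ideal.mul_mem_mul (hg i) hz
    intro r hr
    obtain ⟨y, hy, z, hz, rfl⟩ := Submodule.mem_sup.1 (h1 hr)
    refine Submodule.add_mem _ ?_ (Submodule.mem_sup_right hz)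
    refine Submodule.mul_induction_on hy ?_ fun x y hx hy => Submodule.add_mem _ hx hy
    intro a ha t ht
    obtain ⟨c, rfl⟩ := (Ideal.mem_span_range_iff_exists_fun).1 ha
    rw [Finset.sum_mul]
    refine Submodule.sum_mem _ fun i _ => ?_
    rw [show c i * g i * t = g i * (c i * t) by ring]
    exact h2 _ (Ideal.mul_mem_left _ _ ht) i

/-- If `L` is generated by `g₁, …, gₙ` up to `L²`, then `R ⧸ L ^ j` has dimension at most
`dim (R ⧸ L)` times the number of monomials of degree `< j` in `n` variables. -/
theorem finrank_quotient_pow_le (L : Ideal R) (g : Fin n → R) (hg : ∀ i, g i ∈ L)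
    (hL : L ≤ Ideal.span (Set.range g) ⊔ L ^ 2) [hfin : FiniteDimensional ℂ (R ⧸ L)] (j : ℕ) :
    FiniteDimensional ℂ (R ⧸ L ^ j) ∧
      Module.finrank ℂ (R ⧸ L ^ j) ≤ Module.finrank ℂ (R ⧸ L) * (lowExponents n j).card := by
  let β := Module.finBasis ℂ (R ⧸ L)
  choose e he using fun b => Ideal.Quotient.mk_surjective (β b)
  have hspan : Submodule.span ℂ (Set.range e) ⊔ L.restrictScalars ℂ = ⊤ := by
    have h1 : (Submodule.span ℂ (Set.range e)).map (Ideal.Quotient.mkₐ ℂ L).toLinearMap = ⊤ := by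
      rw [Submodule.map_span, ← Set.range_comp, ← β.span_eq]
      congr 2
      ext b
      exact he b
    rw [eq_top_iff]
    intro r _
    have h2 : (Ideal.Quotient.mkₐ ℂ L).toLinearMap r ∈ (⊤ : Submodule ℂ (R ⧸ L)) :=
      Submodule.mem_top
    rw [← h1] at h2
    obtain ⟨y, hy, hyr⟩ := h2
    have h3 : r - y ∈ L := Ideal.Quotient.eq.1 hyr.symm
    rw [show r = y + (r - y) by ring]
    exact Submodule.add_mem_sup hy h3
  let G : Fin (Module.finrank ℂ (R ⧸ L)) × lowExponents n j → R :=
    fun p => e p.1 * ∏ i, g i ^ (p.2 : Fin n → ℕ) i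
  have hG : ∀ k ≤ j, (⊤ : Submodule ℂ R) ≤
      Submodule.span ℂ (Set.range G) ⊔ (L ^ k).restrictScalars ℂ := by
    intro k hk
    induction k with
    | zero =>
      refine le_sup_of_le_right ?_
      rw [pow_zero, Ideal.one_eq_top]
      exact fun _ _ => Submodule.mem_top
    | succ k ih =>
      refine (ih (by omega)).trans (sup_le le_sup_left
        ((pow_le_span_sup_pow L g hg hL e hspan k).trans (sup_le_sup_right ?_ _)))
      refine Submodule.span_mono ?_
      rintro _ ⟨b, α, hα, rfl⟩
      exact ⟨(b, ⟨α, mem_lowExponents.2 (by omega)⟩), rfl⟩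
  have htop : Submodule.span ℂ (Set.range ((Ideal.Quotient.mkₐ ℂ (L ^ j)) ∘ G)) = ⊤ := by
    rw [eq_top_iff]
    intro r _
    obtain ⟨r, rfl⟩ := Ideal.Quotient.mk_surjective r
    obtain ⟨y, hy, z, hz, rfl⟩ := Submodule.mem_sup.1 (hG j le_rfl (Submodule.mem_top (x := r)))
    rw [map_add, Ideal.Quotient.eq_zero_iff_mem.2 hz, add_zero, Set.range_comp]
    have := Submodule.mem_map_of_mem (f := (Ideal.Quotient.mkₐ ℂ (L ^ j)).toLinearMap) hy
    rwa [Submodule.map_span] at this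
  classical
  refine ⟨⟨⟨Finset.univ.image ((Ideal.Quotient.mkₐ ℂ (L ^ j)) ∘ G), by
    rw [Finset.coe_image, Finset.coe_univ, Set.image_univ]; exact htop⟩⟩, ?_⟩
  rw [← finrank_top, ← htop]
  refine (finrank_range_le_card _).trans (by simp)

end Upper

/-! ### Division by polynomials with pure leading forms -/

section Free

open MvPolynomial

variable {n : ℕ}

/-- The polynomials all of whose monomials have degree `< d`. -/
def degLT (n d : ℕ) : Submodule ℂ (MvPolynomial (Fin n) ℂ) where
  carrier := {p | ∀ m ∈ p.support, m.degree < d}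
  zero_mem' := by simp
  add_mem' := by
    classical
    intro p q hp hq m hm
    rcases Finset.mem_union.1 (support_add hm) with h | h
    exacts [hp m h, hq m h]
  smul_mem' := fun c p hp m hm => hp m (support_smul hm)

theorem degLT_mono {d d' : ℕ} (h : d ≤ d') : degLT n d ≤ degLT n d' :=
  fun _ hp m hm => (hp m hm).trans_le h

theorem mul_mem_degLT {d d' : ℕ} {p q : MvPolynomial (Fin n) ℂ} (hp : p ∈ degLT n (d + 1))
    (hq : q ∈ degLT n d') : p * q ∈ degLT n (d + d') := by
  classical
  intro m hm
  obtain ⟨a, ha, b, hb, rfl⟩ := Finset.mem_add.1 (support_mul p q hm)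
  have h1 := hp a ha
  have h2 := hq b hb
  rw [map_add]
  omega

/-- `p` and `q` have degree at most `d` and the same homogeneous component of degree `d`. -/
def SameTop (d : ℕ) (p q : MvPolynomial (Fin n) ℂ) : Prop :=
  p ∈ degLT n (d + 1) ∧ q ∈ degLT n (d + 1) ∧ p - q ∈ degLT n d

theorem SameTop.mul {d d' : ℕ} {p q p' q' : MvPolynomial (Fin n) ℂ} (h : SameTop d p q)
    (h' : SameTop d' p' q') : SameTop (d + d') (p * p') (q * q') := by
  refine ⟨by rw [add_assoc]; exact mul_mem_degLT h.1 h'.1,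
    by rw [add_assoc]; exact mul_mem_degLT h.2.1 h'.2.1, ?_⟩
  rw [show p * p' - q * q' = p * (p' - q') + q' * (p - q) by ring]
  refine Submodule.add_mem _ (mul_mem_degLT h.1 h'.2.2) ?_
  rw [add_comm]
  exact mul_mem_degLT h'.2.1 h.2.2

theorem SameTop.one : SameTop 0 (1 : MvPolynomial (Fin n) ℂ) 1 := by
  have : (1 : MvPolynomial (Fin n) ℂ) ∈ degLT n (0 + 1) := by
    intro m hm
    rw [support_one] at hm
    simp [Finset.mem_singleton.1 hm]
  exact ⟨this, this, by simp⟩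

theorem SameTop.pow {d : ℕ} {p q : MvPolynomial (Fin n) ℂ} (h : SameTop d p q) (k : ℕ) :
    SameTop (k * d) (p ^ k) (q ^ k) := by
  induction k with
  | zero => simpa using SameTop.one
  | succ k ih =>
    rw [pow_succ, pow_succ, add_mul, one_mul]
    exact ih.mul h

theorem SameTop.prod {ι : Type*} (s : Finset ι) {d : ι → ℕ} {p q : ι → MvPolynomial (Fin n) ℂ}
    (h : ∀ i, SameTop (d i) (p i) (q i)) :
    SameTop (∑ i ∈ s, d i) (∏ i ∈ s, p i) (∏ i ∈ s, q i) := by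
  classical
  induction s using Finset.induction_on with
  | empty => simpa using SameTop.one
  | insert a s ha ih =>
    rw [Finset.sum_insert ha, Finset.prod_insert ha, Finset.prod_insert ha]
    exact (h a).mul ih

variable (D : ℕ) (G : Fin n → MvPolynomial (Fin n) ℂ)

/-- The linear endomorphism sending `x ^ e` to `x ^ (e % D) * G ^ (e / D)`. -/
def divMap : MvPolynomial (Fin n) ℂ →ₗ[ℂ] MvPolynomial (Fin n) ℂ :=
  (basisMonomials (Fin n) ℂ).constr ℂ fun e => ∏ i, (X i ^ (e i % D) * G i ^ (e i / D))

theorem divMap_monomial (e : Fin n →₀ ℕ) :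
    divMap D G (monomial e 1) = ∏ i, (X i ^ (e i % D) * G i ^ (e i / D)) := by
  have := (basisMonomials (Fin n) ℂ).constr_basis ℂ
    (fun e => ∏ i, (X i ^ (e i % D) * G i ^ (e i / D) : MvPolynomial (Fin n) ℂ)) e
  rwa [coe_basisMonomials] at this

variable {D G}

theorem X_mem_degLT (i : Fin n) : (X i : MvPolynomial (Fin n) ℂ) ∈ degLT n (1 + 1) := by
  intro m hm
  rw [support_X] at hm
  simp [Finset.mem_singleton.1 hm]

theorem divMap_sub_mem (hG : ∀ i, G i - X i ^ D ∈ degLT n D) (d : ℕ)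
    {p : MvPolynomial (Fin n) ℂ} (hp : p ∈ degLT n (d + 1)) : divMap D G p - p ∈ degLT n d := by
  have hX : ∀ i : Fin n, SameTop 1 (X i : MvPolynomial (Fin n) ℂ) (X i) := fun i =>
    ⟨X_mem_degLT i, X_mem_degLT i, by simp⟩
  have hXD : ∀ i : Fin n, (X i ^ D : MvPolynomial (Fin n) ℂ) ∈ degLT n (D + 1) := fun i => by
    simpa using ((hX i).pow D).1
  have hG' : ∀ i, SameTop D (G i) (X i ^ D) := fun i => by
    refine ⟨?_, hXD i, hG i⟩
    rw [← sub_add_cancel (G i) (X i ^ D)]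
    exact Submodule.add_mem _ (degLT_mono (Nat.le_succ D) (hG i)) (hXD i)
  have hmon : ∀ e : Fin n →₀ ℕ, divMap D G (monomial e 1) - monomial e 1 ∈ degLT n e.degree := by
    intro e
    have h1 : SameTop (∑ i, e i) (∏ i, (X i ^ (e i % D) * G i ^ (e i / D)))
        (∏ i, (X i ^ e i : MvPolynomial (Fin n) ℂ)) := by
      refine SameTop.prod _ fun i => ?_
      have h2 := ((hX i).pow (e i % D)).mul ((hG' i).pow (e i / D))
      rwa [← pow_mul, ← pow_add, mul_one, mul_comm (e i / D) D, Nat.mod_add_div] at h2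
    rw [divMap_monomial, monomial_eq, C_1, one_mul, Finsupp.prod_fintype _ _ (by simp),
      Finsupp.degree_eq_sum]
    exact h1.2.2
  rw [p.as_sum, map_sum, ← Finset.sum_sub_distrib]
  refine Submodule.sum_mem _ fun e he => ?_
  have h1 : monomial e (coeff e p) = coeff e p • monomial e (1 : ℂ) := by
    rw [smul_monomial, smul_eq_mul, mul_one]
  rw [h1, map_smul, ← smul_sub]
  exact Submodule.smul_mem _ _ (degLT_mono (Nat.lt_succ_iff.1 (hp e he)) (hmon e))

theorem exists_mem_degLT (p : MvPolynomial (Fin n) ℂ) : ∃ d, p ∈ degLT n d :=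
  ⟨p.support.sup Finsupp.degree + 1, fun _ hm =>
    Nat.lt_succ_of_le (Finset.le_sup (f := Finsupp.degree) hm)⟩

theorem eq_zero_of_mem_degLT_zero {p : MvPolynomial (Fin n) ℂ} (hp : p ∈ degLT n 0) : p = 0 := by
  by_contra h
  obtain ⟨m, hm⟩ := Finset.nonempty_iff_ne_empty.2 (fun h' => h (support_eq_empty.1 h'))
  exact absurd (hp m hm) (Nat.not_lt_zero _)

/-- `divMap` is the identity up to terms of lower degree, hence bijective. -/
theorem divMap_bijective (hG : ∀ i, G i - X i ^ D ∈ degLT n D) :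
    Function.Bijective (divMap D G) := by
  constructor
  · rw [injective_iff_map_eq_zero]
    intro p hp
    have : ∀ d, p ∈ degLT n d → p = 0 := by
      intro d
      induction d with
      | zero => exact eq_zero_of_mem_degLT_zero
      | succ d ih =>
        intro h
        have h1 := divMap_sub_mem hG d h
        rw [hp, zero_sub, neg_mem_iff] at h1
        exact ih h1
    obtain ⟨d, hd⟩ := exists_mem_degLT p
    exact this d hd
  · have : ∀ d, ∀ p ∈ degLT n d, p ∈ LinearMap.range (divMap D G) := by
      intro d
      induction d with
      | zero =>
        intro p hp
        rw [eq_zero_of_mem_degLT_zero hp]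
        exact Submodule.zero_mem _
      | succ d ih =>
        intro p h
        have h1 := ih _ (divMap_sub_mem hG d h)
        have h2 := Submodule.sub_mem _ (LinearMap.mem_range_self (divMap D G) p) h1
        rwa [sub_sub_cancel] at h2
    intro p
    obtain ⟨d, hd⟩ := exists_mem_degLT p
    exact this d p hd

/-- The span of the monomials `x ^ e` with `|e / D| ≥ j`. -/
def highSpan (n D j : ℕ) : Submodule ℂ (MvPolynomial (Fin n) ℂ) :=
  Submodule.span ℂ {p | ∃ e : Fin n →₀ ℕ, j ≤ ∑ i, e i / D ∧ p = monomial e 1}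

/-- Multiplication by `G i` corresponds under `divMap` to multiplication of monomials by
`x i ^ D`. -/
theorem pow_le_map_highSpan (hD : 0 < D) (hG : ∀ i, G i - X i ^ D ∈ degLT n D) (j : ℕ) :
    ((Ideal.span (Set.range G)) ^ j).restrictScalars ℂ ≤
      (highSpan n D j).map (divMap D G) := by
  induction j with
  | zero =>
    intro p _
    obtain ⟨p, rfl⟩ := (divMap_bijective hG).2 p
    refine Submodule.mem_map_of_mem ?_
    rw [p.as_sum]
    refine Submodule.sum_mem _ fun e _ => ?_
    rw [← mul_one (coeff e p), ← smul_eq_mul, ← smul_monomial]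
    exact Submodule.smul_mem _ _ (Submodule.subset_span ⟨e, by simp, rfl⟩)
  | succ j ih =>
    have h1 : ∀ i, ∀ p ∈ highSpan n D j, G i * divMap D G p ∈
        (highSpan n D (j + 1)).map (divMap D G) := by
      intro i p hp
      induction hp using Submodule.span_induction with
      | mem x hx =>
        obtain ⟨e, he, rfl⟩ := hx
        refine ⟨monomial (e + Finsupp.single i D) 1, Submodule.subset_span ⟨_, ?_, rfl⟩, ?_⟩
        · have h2 : ∀ k, (e + Finsupp.single i D) k / D =
              e k / D + (if k = i then 1 else 0) := by
            intro k
            by_cases hk : k = i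
            · subst hk; simp [hD]
            · simp [hk, Finsupp.single_eq_of_ne hk]
          rw [Finset.sum_congr rfl fun k _ => h2 k, Finset.sum_add_distrib]
          simpa using he
        · rw [divMap_monomial, divMap_monomial]
          have h2 : ∀ k, (X k ^ ((e + Finsupp.single i D) k % D) *
              G k ^ ((e + Finsupp.single i D) k / D) : MvPolynomial (Fin n) ℂ) =
              (if k = i then G i else 1) * (X k ^ (e k % D) * G k ^ (e k / D)) := by
            intro k
            by_cases hk : k = i
            · subst hk; simp [hD]; ring
            · simp [hk, Finsupp.single_eq_of_ne hk]
          rw [Finset.prod_congr rfl fun k _ => h2 k, Finset.prod_mul_distrib]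
          simp
      | zero => simp
      | add x y _ _ hx hy => rw [map_add, mul_add]; exact Submodule.add_mem _ hx hy
      | smul a x _ hx =>
        rw [map_smul, mul_smul_comm]
        exact Submodule.smul_mem _ _ hx
    intro p hp
    rw [Submodule.restrictScalars_mem, pow_succ'] at hp
    refine Submodule.mul_induction_on hp ?_ fun x y hx hy => Submodule.add_mem _ hx hy
    intro a ha t ht
    obtain ⟨c, rfl⟩ := (Ideal.mem_span_range_iff_exists_fun).1 ha
    rw [Finset.sum_mul]
    refine Submodule.sum_mem _ fun i _ => ?_
    rw [show c i * G i * t = G i * (c i * t) by ring]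
    obtain ⟨y, hy, hyt⟩ := ih (Ideal.mul_mem_left _ (c i) ht)
    rw [← hyt]
    exact h1 i y hy

/-- The monomials with all exponents `< D` span the quotient by `(G₁, …, Gₙ)`. -/
theorem finrank_quotient_le_pow (hG : ∀ i, G i - X i ^ D ∈ degLT n D) :
    FiniteDimensional ℂ (MvPolynomial (Fin n) ℂ ⧸ Ideal.span (Set.range G)) ∧
      Module.finrank ℂ (MvPolynomial (Fin n) ℂ ⧸ Ideal.span (Set.range G)) ≤ D ^ n := by
  classical
  let I := Ideal.span (Set.range G)
  let v : (Fin n → Fin D) → MvPolynomial (Fin n) ℂ ⧸ I := fun r =>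
    Ideal.Quotient.mk I (∏ i, X i ^ (r i : ℕ))
  have htop : Submodule.span ℂ (Set.range v) = ⊤ := by
    rw [eq_top_iff]
    intro p _
    obtain ⟨p, rfl⟩ := Ideal.Quotient.mk_surjective p
    obtain ⟨p, rfl⟩ := (divMap_bijective hG).2 p
    rw [p.as_sum, map_sum, map_sum]
    refine Submodule.sum_mem _ fun e _ => ?_
    rw [← mul_one (coeff e p), ← smul_eq_mul, ← smul_monomial, map_smul,
      ← Ideal.Quotient.mkₐ_eq_mk ℂ, map_smul, Ideal.Quotient.mkₐ_eq_mk]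
    refine Submodule.smul_mem _ _ ?_
    rw [divMap_monomial]
    by_cases he : ∀ i, e i < D
    · refine Submodule.subset_span ⟨fun i => ⟨e i, he i⟩, ?_⟩
      simp only [v]
      congr 1
      refine Finset.prod_congr rfl fun i _ => ?_
      rw [Nat.mod_eq_of_lt (he i), Nat.div_eq_of_lt (he i), pow_zero, mul_one]
    · push Not at he
      obtain ⟨i, hi⟩ := he
      rcases Nat.eq_zero_or_pos D with rfl | hD
      · -- here `G i = 1`, so the quotient is trivial
        have h1 : G i = 1 := by
          have := eq_zero_of_mem_degLT_zero (hG i)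
          rwa [pow_zero, sub_eq_zero] at this
        have h2 : I = ⊤ := (Ideal.eq_top_iff_one _).2 (h1 ▸ Ideal.subset_span ⟨i, rfl⟩)
        rw [Ideal.Quotient.eq_zero_iff_mem.2 (h2 ▸ Submodule.mem_top)]
        exact Submodule.zero_mem _
      · rw [Ideal.Quotient.eq_zero_iff_mem.2]
        · exact Submodule.zero_mem _
        · rw [← Finset.mul_prod_erase Finset.univ _ (Finset.mem_univ i)]
          refine Ideal.mul_mem_right _ _ (Ideal.mul_mem_left _ _
            (Ideal.pow_mem_of_mem _ (Ideal.subset_span (Set.mem_range_self i)) _ ?_))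
          exact Nat.div_pos hi hD
  refine ⟨⟨⟨Finset.univ.image v, by
    rw [Finset.coe_image, Finset.coe_univ, Set.image_univ]; exact htop⟩⟩, ?_⟩
  rw [← finrank_top, ← htop]
  refine (finrank_range_le_card _).trans (by simp)

/-- The powers of `(G₁, …, Gₙ)` have at least the colength they would have if the `Gᵢ` were
the pure powers `xᵢ ^ D`. -/
theorem le_finrank_quotient_pow (hD : 0 < D) (hG : ∀ i, G i - X i ^ D ∈ degLT n D) (j : ℕ)
    [FiniteDimensional ℂ (MvPolynomial (Fin n) ℂ ⧸ Ideal.span (Set.range G) ^ j)] :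
    D ^ n * (lowExponents n j).card ≤
      Module.finrank ℂ (MvPolynomial (Fin n) ℂ ⧸ Ideal.span (Set.range G) ^ j) := by
  classical
  let Φ := LinearEquiv.ofBijective (divMap D G) (divMap_bijective hG)
  let ex : (Fin n → Fin D) × lowExponents n j → (Fin n →₀ ℕ) := fun p =>
    Finsupp.equivFunOnFinite.symm fun i => (p.1 i : ℕ) + D * (p.2 : Fin n → ℕ) i
  have hexdiv : ∀ p i, ex p i / D = (p.2 : Fin n → ℕ) i := by
    intro p i
    simp only [ex, Finsupp.equivFunOnFinite_symm_apply_apply]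
    rw [Nat.add_mul_div_left _ _ hD, Nat.div_eq_of_lt (p.1 i).2, zero_add]
  have hexmod : ∀ p i, ex p i % D = p.1 i := by
    intro p i
    simp only [ex, Finsupp.equivFunOnFinite_symm_apply_apply]
    rw [Nat.add_mul_mod_self_left, Nat.mod_eq_of_lt (p.1 i).2]
  have hexinj : Function.Injective ex := by
    intro p p' h
    refine Prod.ext (funext fun i => Fin.ext ?_) (Subtype.ext (funext fun i => ?_))
    · rw [← hexmod, ← hexmod, h]
    · rw [← hexdiv, ← hexdiv, h]
  let lam : MvPolynomial (Fin n) ℂ →ₗ[ℂ] ((Fin n → Fin D) × lowExponents n j → ℂ) :=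
    LinearMap.pi (fun p => lcoeff ℂ (ex p)) ∘ₗ Φ.symm.toLinearMap
  have hlam : ∀ p ∈ ((Ideal.span (Set.range G)) ^ j).restrictScalars ℂ, lam p = 0 := by
    intro p hp
    obtain ⟨y, hy, rfl⟩ := pow_le_map_highSpan hD hG j hp
    have h1 : Φ.symm (divMap D G y) = y := Φ.symm_apply_apply y
    have h2 : highSpan n D j ≤ LinearMap.ker
        (LinearMap.pi (fun p => lcoeff ℂ (ex p)) :
          MvPolynomial (Fin n) ℂ →ₗ[ℂ] ((Fin n → Fin D) × lowExponents n j → ℂ)) := by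
      refine Submodule.span_le.2 ?_
      rintro _ ⟨e, he, rfl⟩
      refine LinearMap.mem_ker.2 (funext fun p => ?_)
      rw [LinearMap.pi_apply, lcoeff_apply, coeff_monomial, if_neg, Pi.zero_apply]
      rintro rfl
      rw [Finset.sum_congr rfl fun i _ => hexdiv p i] at he
      exact absurd (mem_lowExponents.1 p.2.2) (not_lt.2 he)
    change LinearMap.pi (fun p => lcoeff ℂ (ex p)) (Φ.symm (divMap D G y)) = 0
    rw [h1]
    exact h2 hy
  let lam' : (MvPolynomial (Fin n) ℂ ⧸ Ideal.span (Set.range G) ^ j) →ₗ[ℂ]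
      ((Fin n → Fin D) × lowExponents n j → ℂ) :=
    (Submodule.liftQ (((Ideal.span (Set.range G)) ^ j).restrictScalars ℂ) lam hlam) ∘ₗ
      (Submodule.Quotient.restrictScalarsEquiv ℂ (Ideal.span (Set.range G) ^ j)).symm.toLinearMap
  have hsurj : Function.Surjective lam' := by
    intro w
    refine ⟨Submodule.Quotient.mk (Φ (∑ p, w p • monomial (ex p) 1)), ?_⟩
    change LinearMap.pi (fun p => lcoeff ℂ (ex p)) (Φ.symm (Φ _)) = w
    rw [Φ.symm_apply_apply]
    ext p
    simp [coeff_monomial, hexinj.eq_iff]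
  have h3 := LinearMap.finrank_le_finrank_of_surjective (f := lam') hsurj
  refine le_trans ?_ h3
  simp

end Free

/-! ### Colengths of quotients -/

section Quotients

variable {A B : Type*} [CommRing A] [Algebra ℂ A] [CommRing B] [Algebra ℂ B]

theorem finrank_quotient_le_of_le {I J : Ideal A} (h : I ≤ J) [FiniteDimensional ℂ (A ⧸ I)] :
    FiniteDimensional ℂ (A ⧸ J) ∧ Module.finrank ℂ (A ⧸ J) ≤ Module.finrank ℂ (A ⧸ I) := by
  have hs : Function.Surjective (Ideal.Quotient.factorₐ ℂ h).toLinearMap :=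
    Ideal.Quotient.factor_surjective h
  exact ⟨Module.Finite.of_surjective _ hs, LinearMap.finrank_le_finrank_of_surjective hs⟩

theorem finrank_quotient_comap_le (f : A →ₐ[ℂ] B) (J : Ideal B) [FiniteDimensional ℂ (B ⧸ J)] :
    FiniteDimensional ℂ (A ⧸ J.comap f) ∧
      Module.finrank ℂ (A ⧸ J.comap f) ≤ Module.finrank ℂ (B ⧸ J) := by
  have hi : Function.Injective (Ideal.quotientMapₐ J f le_rfl).toLinearMap :=
    Ideal.quotientMap_injective' (f := (f : A →+* B)) (H := le_rfl) le_rfl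
  exact ⟨Module.Finite.of_injective _ hi, LinearMap.finrank_le_finrank_of_injective hi⟩

theorem finrank_quotient_mul {I J : Ideal A} (h : IsCoprime I J) [FiniteDimensional ℂ (A ⧸ I)]
    [FiniteDimensional ℂ (A ⧸ J)] : Module.finrank ℂ (A ⧸ I * J) =
      Module.finrank ℂ (A ⧸ I) + Module.finrank ℂ (A ⧸ J) := by
  let e : (A ⧸ I * J) ≃ₐ[ℂ] (A ⧸ I) × (A ⧸ J) :=
    AlgEquiv.ofRingEquiv (f := Ideal.quotientMulEquivQuotientProd I J h) fun _ => rfl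
  rw [e.toLinearEquiv.finrank_eq, Module.finrank_prod]

end Quotients

/-! ### Local rings with coordinates -/

/-- A local `ℂ`-algebra with residue field `ℂ` whose maximal ideal is generated by `x₁, …, xₙ`,
together with derivations `∂ᵢ` satisfying `∂ᵢ xⱼ = δᵢⱼ`. -/
structure LocalCoords (n : ℕ) (R : Type*) [CommRing R] [Algebra ℂ R] [IsLocalRing R] where
  x : Fin n → R
  D : Fin n → Derivation ℂ R R
  D_x : ∀ i j, D i (x j) = if i = j then 1 else 0
  span_x : Ideal.span (Set.range x) = IsLocalRing.maximalIdeal R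
  residue : ∀ r, ∃ c, r - algebraMap ℂ R c ∈ IsLocalRing.maximalIdeal R

namespace LocalCoords

open MvPolynomial IsLocalRing

variable {n : ℕ} {R : Type*} [CommRing R] [Algebra ℂ R] [IsLocalRing R]

/-- Polynomials, as elements of the local ring. -/
def ev (S : LocalCoords n R) : MvPolynomial (Fin n) ℂ →ₐ[ℂ] R := aeval S.x

theorem x_mem (S : LocalCoords n R) (i : Fin n) : S.x i ∈ maximalIdeal R :=
  S.span_x ▸ Ideal.subset_span ⟨i, rfl⟩

theorem map_ev_idealOfVars (S : LocalCoords n R) :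
    (idealOfVars (Fin n) ℂ).map S.ev = maximalIdeal R := by
  rw [← S.span_x, idealOfVars, Ideal.map_span, ← Set.range_comp]
  congr 2
  ext i
  exact aeval_X _ _

theorem ev_mem_pow (S : LocalCoords n R) {k : ℕ}
    {p : MvPolynomial (Fin n) ℂ} (hp : p ∈ idealOfVars (Fin n) ℂ ^ k) :
    S.ev p ∈ maximalIdeal R ^ k := by
  rw [← S.map_ev_idealOfVars, ← Ideal.map_pow]
  exact Ideal.mem_map_of_mem _ hp

theorem exists_sub_ev_mem (S : LocalCoords n R) (k : ℕ) (r : R) :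
    ∃ p, r - S.ev p ∈ maximalIdeal R ^ k := by
  induction k generalizing r with
  | zero => exact ⟨0, by simp⟩
  | succ k ih =>
    obtain ⟨c, hc⟩ := S.residue r
    rw [← S.span_x] at hc
    obtain ⟨a, ha⟩ := (Ideal.mem_span_range_iff_exists_fun).1 hc
    choose p hp using fun i => ih (a i)
    refine ⟨C c + ∑ i, p i * X i, ?_⟩
    have h1 : r - S.ev (C c + ∑ i, p i * X i) = ∑ i, (a i - S.ev (p i)) * S.x i := by
      have h2 : S.ev (C c) = algebraMap ℂ R c := aeval_C _ _
      have h3 : ∀ i, S.ev (X i) = S.x i := aeval_X _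
      simp only [map_add, map_sum, map_mul, h2, h3, sub_mul, Finset.sum_sub_distrib, ha]
      ring
    rw [h1, pow_succ]
    exact Ideal.sum_mem _ fun i _ => Ideal.mul_mem_mul (hp i) (S.x_mem i)

theorem D_mem_pow (S : LocalCoords n R) (i : Fin n) (k : ℕ) {r : R}
    (hr : r ∈ maximalIdeal R ^ (k + 1)) :
    S.D i r ∈ maximalIdeal R ^ k := by
  induction k generalizing r with
  | zero => simp
  | succ k ih =>
    rw [pow_succ] at hr
    refine Submodule.mul_induction_on hr ?_ fun a b ha hb => by
      rw [map_add]; exact Ideal.add_mem _ ha hb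
    intro a ha b hb
    rw [Derivation.leibniz, smul_eq_mul, smul_eq_mul]
    refine Ideal.add_mem _ (Ideal.mul_mem_right _ _ ha) ?_
    rw [pow_succ']
    exact Ideal.mul_mem_mul hb (ih ha)

theorem D_ev (S : LocalCoords n R) (i : Fin n) (p : MvPolynomial (Fin n) ℂ) :
    S.D i (S.ev p) = S.ev (pderiv i p) := by
  induction p using MvPolynomial.induction_on with
  | C a =>
    have : S.ev (C a) = algebraMap ℂ R a := aeval_C _ _
    simp [this]
  | add p q hp hq => simp [hp, hq]
  | mul_X p j hp =>
    have h3 : S.ev (X j) = S.x j := aeval_X _ _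
    rw [map_mul, Derivation.leibniz, Derivation.leibniz, hp, h3, S.D_x, pderiv_X]
    simp only [smul_eq_mul, map_add, map_mul, h3, Pi.single_apply]
    by_cases h : i = j
    · simp [h]
    · simp [h, Ne.symm h]

/-- A polynomial vanishing to order `k` in the local ring has no terms of degree `< k`. -/
theorem mem_pow_of_ev_mem (S : LocalCoords n R) (k : ℕ) {p : MvPolynomial (Fin n) ℂ}
    (hp : S.ev p ∈ maximalIdeal R ^ k) : p ∈ idealOfVars (Fin n) ℂ ^ k := by
  induction k generalizing p with
  | zero => simp
  | succ k ih =>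
    rw [mem_pow_idealOfVars_iff']
    intro m hm
    by_cases hm0 : m = 0
    · subst hm0
      have h1 : p - C (constantCoeff p) ∈ idealOfVars (Fin n) ℂ ^ 1 := by
        rw [mem_pow_idealOfVars_iff']
        intro x hx
        have : x = 0 := by
          rw [← Finsupp.degree_eq_zero_iff]; omega
        simp [this, constantCoeff_eq]
      have h2 := S.ev_mem_pow h1
      have h3 : S.ev (C (constantCoeff p)) = algebraMap ℂ R (constantCoeff p) := aeval_C _ _
      rw [pow_one, map_sub, h3] at h2
      have h4 := Ideal.sub_mem _ (Ideal.pow_le_self (Nat.succ_ne_zero k) hp) h2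
      rw [sub_sub_cancel] at h4
      by_contra h
      exact (mem_maximalIdeal _).1 h4 ((IsUnit.mk0 _ h).map (algebraMap ℂ R))
    · obtain ⟨i, hi⟩ : ∃ i, m i ≠ 0 := by
        by_contra! h
        exact hm0 (Finsupp.ext h)
      have h1 := S.D_mem_pow i k hp
      rw [S.D_ev] at h1
      have h2 := (mem_pow_idealOfVars_iff' k _).1 (ih h1) (m - Finsupp.single i 1) (by
        have h3 : m - Finsupp.single i 1 + Finsupp.single i 1 = m :=
          tsub_add_cancel_of_le (Finsupp.single_le_iff.2 (Nat.one_le_iff_ne_zero.2 hi))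
        have h4 := congrArg Finsupp.degree h3
        rw [map_add, Finsupp.degree_single] at h4
        omega)
      rw [coeff_pderiv, tsub_add_cancel_of_le
        (Finsupp.single_le_iff.2 (Nat.one_le_iff_ne_zero.2 hi))] at h2
      refine (mul_eq_zero.1 h2).resolve_right ?_
      exact Nat.cast_add_one_ne_zero _

theorem finiteDimensional_quotient_pow (S : LocalCoords n R) (k : ℕ) :
    FiniteDimensional ℂ (R ⧸ maximalIdeal R ^ k) := by
  have h1 : FiniteDimensional ℂ (R ⧸ maximalIdeal R) := by
    refine Module.Finite.of_surjective (Algebra.linearMap ℂ (R ⧸ maximalIdeal R)) fun y => ?_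
    obtain ⟨r, rfl⟩ := Ideal.Quotient.mk_surjective y
    obtain ⟨c, hc⟩ := S.residue r
    exact ⟨c, (Ideal.Quotient.eq.2 hc).symm⟩
  exact (finrank_quotient_pow_le (maximalIdeal R) S.x S.x_mem (by rw [S.span_x]; exact le_sup_left)
    k).1

theorem finiteDimensional_quotient (S : LocalCoords n R) {J : Ideal R} {K : ℕ}
    (h : maximalIdeal R ^ K ≤ J) :
    FiniteDimensional ℂ (R ⧸ J) := by
  have := S.finiteDimensional_quotient_pow K
  exact (finrank_quotient_le_of_le h).1

theorem fg_pow_maximalIdeal (S : LocalCoords n R) (k : ℕ) : (maximalIdeal R ^ k).FG :=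
  Ideal.FG.pow (S.span_x ▸ ⟨(Set.finite_range S.x).toFinset, by simp⟩)

end LocalCoords

/-! ### Lower bound for the colength of powers -/

namespace LocalCoords

open MvPolynomial IsLocalRing

variable {n : ℕ} {R : Type*} [CommRing R] [Algebra ℂ R] [IsLocalRing R]

theorem exists_sub_ev_mem_of_mem_map (S : LocalCoords n R) (W : Ideal (MvPolynomial (Fin n) ℂ))
    (k : ℕ) {y : R} (hy : y ∈ W.map S.ev) : ∃ w ∈ W, y - S.ev w ∈ maximalIdeal R ^ k := by
  induction hy using Submodule.span_induction with
  | mem x hx =>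
    obtain ⟨w, hw, rfl⟩ := hx
    exact ⟨w, hw, by rw [sub_eq_zero.2 rfl]; exact Ideal.zero_mem _⟩
  | zero => exact ⟨0, Ideal.zero_mem _, by simp⟩
  | add x y _ _ hx hy =>
    obtain ⟨a, ha, h1⟩ := hx
    obtain ⟨b, hb, h2⟩ := hy
    refine ⟨a + b, Ideal.add_mem _ ha hb, ?_⟩
    rw [map_add, add_sub_add_comm]
    exact Ideal.add_mem _ h1 h2
  | smul a x _ hx =>
    obtain ⟨w, hw, h1⟩ := hx
    obtain ⟨p, hp⟩ := S.exists_sub_ev_mem k a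
    refine ⟨p * w, Ideal.mul_mem_left _ _ hw, ?_⟩
    rw [map_mul, smul_eq_mul,
      show a * x - S.ev p * S.ev w = a * (x - S.ev w) + S.ev w * (a - S.ev p) by ring]
    exact Ideal.add_mem _ (Ideal.mul_mem_left _ _ h1) (Ideal.mul_mem_left _ _ hp)

/-- Polynomials belonging locally to the extension of `W` belong to `W` up to high order. -/
theorem comap_map_ev_le (S : LocalCoords n R) (W : Ideal (MvPolynomial (Fin n) ℂ)) (k : ℕ) :
    (W.map S.ev).comap S.ev ≤ W ⊔ idealOfVars (Fin n) ℂ ^ k := by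
  intro p hp
  obtain ⟨w, hw, h⟩ := S.exists_sub_ev_mem_of_mem_map W k hp
  rw [← map_sub] at h
  rw [← add_sub_cancel w p]
  exact Submodule.add_mem_sup hw (S.mem_pow_of_ev_mem k h)

/-- The generators of an `𝔪`-primary ideal generated by `n` elements may be taken to be
polynomials, monic of pure degree `D` in the respective variables up to terms of lower degree. -/
theorem exists_poly_generators (S : LocalCoords n R) (g : Fin n → R) {K : ℕ}
    (hK : maximalIdeal R ^ K ≤ Ideal.span (Set.range g)) :
    ∃ (D : ℕ) (G : Fin n → MvPolynomial (Fin n) ℂ), 0 < D ∧ (∀ i, G i - X i ^ D ∈ degLT n D) ∧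
      (Ideal.span (Set.range G)).map S.ev = Ideal.span (Set.range g) := by
  choose s hs using fun i => S.exists_sub_ev_mem (K + 1) (g i)
  choose d hd using fun i => exists_mem_degLT (s i)
  let D := K + 1 + ∑ i, d i
  have hsub : ∀ i, g i - S.ev (s i + X i ^ D) ∈ maximalIdeal R ^ (K + 1) := by
    intro i
    rw [map_add, ← sub_sub]
    refine Ideal.sub_mem _ (hs i) ?_
    have h1 : S.ev (X i) = S.x i := aeval_X _ _
    rw [map_pow, h1]
    exact Ideal.pow_le_pow_right (Nat.le_add_right _ _) (Ideal.pow_mem_pow (S.x_mem i) D)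
  have hle : maximalIdeal R ^ (K + 1) ≤ maximalIdeal R * Ideal.span (Set.range g) := by
    rw [pow_succ']
    exact Ideal.mul_mono_right hK
  refine ⟨D, fun i => s i + X i ^ D, by omega, fun i => ?_, le_antisymm ?_ ?_⟩
  · rw [add_sub_cancel_right]
    have h1 := Finset.single_le_sum (f := d) (fun _ _ => Nat.zero_le _) (Finset.mem_univ i)
    exact degLT_mono (by omega) (hd i)
  · rw [Ideal.map_span, Ideal.span_le]
    rintro _ ⟨_, ⟨i, rfl⟩, rfl⟩
    have h1 := Ideal.sub_mem _ (Ideal.subset_span (Set.mem_range_self i))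
      (Ideal.mul_le_right (hle (hsub i)))
    rwa [sub_sub_cancel] at h1
  · refine Submodule.le_of_le_smul_of_le_jacobson_bot (I := maximalIdeal R)
      ⟨(Set.finite_range g).toFinset, by simp⟩ (maximalIdeal_le_jacobson _) ?_
    rw [Ideal.span_le]
    rintro _ ⟨i, rfl⟩
    rw [← add_sub_cancel (S.ev (s i + X i ^ D)) (g i)]
    exact Submodule.add_mem_sup
      (Ideal.mem_map_of_mem _ (Ideal.subset_span ⟨i, rfl⟩)) (hle (hsub i))

/-- An `𝔪`-primary ideal `J` generated by `n = dim R` elements is as independent as a system of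
coordinates: the colength of `J ^ j` is at least `dim (R ⧸ J)` times the number of monomials of
degree `< j`. For polynomial generators `G`, the ideal `(G)` is `I₁ * I₂`, where `I₁` is the part
supported at the origin and `I₂` the part supported elsewhere. The total colength of `(G) ^ j` is
known from `le_finrank_quotient_pow`, and `finrank_quotient_pow_le` bounds the contribution
of `I₂` from above. -/
theorem le_finrank_quotient_span_pow (S : LocalCoords n R) (g : Fin n → R) {K : ℕ}
    (hK : maximalIdeal R ^ K ≤ Ideal.span (Set.range g)) (j : ℕ)
    [FiniteDimensional ℂ (R ⧸ Ideal.span (Set.range g) ^ j)] :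
    Module.finrank ℂ (R ⧸ Ideal.span (Set.range g)) * (lowExponents n j).card ≤
      Module.finrank ℂ (R ⧸ Ideal.span (Set.range g) ^ j) := by
  obtain ⟨D, G, hD, hG, hmap⟩ := S.exists_poly_generators g hK
  let J := Ideal.span (Set.range g)
  let I := Ideal.span (Set.range G)
  let m := idealOfVars (Fin n) ℂ
  let I₁ := I ⊔ m ^ K
  have hmap' : I.map S.ev = J := hmap
  have hGI : ∀ i, G i ∈ I := fun i => Ideal.subset_span ⟨i, rfl⟩
  have hcomap : ∀ k, J.comap S.ev ≤ I ⊔ m ^ k := fun k => hmap' ▸ S.comap_map_ev_le I k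
  have hcomap' : ∀ k, (J ^ j).comap S.ev ≤ I ^ j ⊔ m ^ k := by
    intro k
    rw [← hmap', ← Ideal.map_pow]
    exact S.comap_map_ev_le (I ^ j) k
  have hmJ : m ^ K ≤ J.comap S.ev := fun p hp => hK (S.ev_mem_pow hp)
  have hI₁ : I₁ = J.comap S.ev :=
    le_antisymm (sup_le (Ideal.map_le_iff_le_comap.1 hmap'.le) hmJ) (hcomap K)
  have hI₁' : (J ^ j).comap S.ev ≤ I₁ ^ j := by
    refine (hcomap' (K * j)).trans (sup_le (Ideal.pow_right_mono le_sup_left j) ?_)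
    rw [pow_mul]
    exact Ideal.pow_right_mono le_sup_right j
  -- `I₁ / I` is idempotent, so Nakayama splits off a complementary ideal `I₂`
  have hidem : I₁ ≤ I ⊔ I₁ • I₁ := by
    refine sup_le le_sup_left (hmJ.trans ((hcomap (K + K)).trans (sup_le_sup_left ?_ _)))
    rw [pow_add]
    exact Ideal.mul_mono le_sup_right le_sup_right
  obtain ⟨r, hr1, hr⟩ := Submodule.exists_sub_one_mem_and_smul_le_of_fg_of_le_sup
    (IsNoetherian.noetherian I₁) le_rfl hidem
  have hrI : ∀ p ∈ I₁, r * p ∈ I := fun p hp => hr (Submodule.smul_mem_pointwise_smul p r I₁ hp)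
  let I₂ := I ⊔ Ideal.span {r}
  have hrI₂ : r ∈ I₂ := Ideal.mem_sup_right (Ideal.mem_span_singleton_self r)
  have hcop : IsCoprime I₁ I₂ := by
    rw [Ideal.isCoprime_iff_add, Ideal.add_eq_sup, Ideal.one_eq_top, Ideal.eq_top_iff_one]
    rw [show (1 : MvPolynomial (Fin n) ℂ) = -(r - 1) + r by ring]
    exact Submodule.add_mem_sup (neg_mem hr1) hrI₂
  have hmul : I₁ * I₂ = I := by
    refine le_antisymm ?_ ?_
    · rw [Ideal.mul_sup]
      refine sup_le Ideal.mul_le_right ?_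
      rw [mul_comm, Ideal.span_singleton_mul_le_iff]
      exact hrI
    · rw [Ideal.mul_eq_inf_of_isCoprime hcop]
      exact le_inf le_sup_left le_sup_left
  have hI₂ : I₂ ≤ Ideal.span (Set.range G) ⊔ I₂ ^ 2 := by
    refine sup_le le_sup_left ((Ideal.span_singleton_le_iff_mem _).2 ?_)
    rw [show r = -(r * (r - 1)) + r ^ 2 by ring]
    exact Submodule.add_mem_sup (neg_mem (hrI _ hr1)) (Ideal.pow_mem_pow hrI₂ 2)
  -- dimension count
  obtain ⟨hfI, hdI⟩ := finrank_quotient_le_pow hG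
  have hfI1 : FiniteDimensional ℂ (MvPolynomial (Fin n) ℂ ⧸ I₁) :=
    (finrank_quotient_le_of_le (I := I) le_sup_left).1
  have hfI2 : FiniteDimensional ℂ (MvPolynomial (Fin n) ℂ ⧸ I₂) :=
    (finrank_quotient_le_of_le (I := I) le_sup_left).1
  have hfIj : FiniteDimensional ℂ (MvPolynomial (Fin n) ℂ ⧸ I ^ j) :=
    (finrank_quotient_pow_le I G hGI le_sup_left j).1
  obtain ⟨hfI2j, hdI2j⟩ := finrank_quotient_pow_le I₂ G (fun i => Ideal.mem_sup_left (hGI i)) hI₂ j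
  obtain ⟨hfc, hdc⟩ := finrank_quotient_comap_le S.ev (J ^ j)
  obtain ⟨hfI1j, hdI1j⟩ := finrank_quotient_le_of_le hI₁'
  have e1 := finrank_quotient_mul hcop
  have e2 := finrank_quotient_mul (hcop.pow (m := j) (n := j))
  rw [← mul_pow, hmul] at e2
  rw [hmul] at e1
  have h3 := le_finrank_quotient_pow hD hG j
  have hJ : Module.finrank ℂ (R ⧸ J) ≤ Module.finrank ℂ (MvPolynomial (Fin n) ℂ ⧸ I₁) := by
    have hle : I₁ ≤ J.comap S.ev := hI₁.le
    refine LinearMap.finrank_le_finrank_of_surjective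
      (f := (Ideal.quotientMapₐ J S.ev hle).toLinearMap) fun y => ?_
    obtain ⟨y, rfl⟩ := Ideal.Quotient.mk_surjective y
    obtain ⟨p, hp⟩ := S.exists_sub_ev_mem K y
    exact ⟨Ideal.Quotient.mk _ p, (Ideal.Quotient.eq.2 (hK hp)).symm⟩
  change Module.finrank ℂ (R ⧸ J) * _ ≤ Module.finrank ℂ (R ⧸ J ^ j)
  change _ ≤ Module.finrank ℂ (MvPolynomial (Fin n) ℂ ⧸ I ^ j) at h3
  change Module.finrank ℂ (MvPolynomial (Fin n) ℂ ⧸ I) ≤ _ at hdI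
  have h4 := Nat.mul_le_mul_right (lowExponents n j).card hdI
  have h5 := Nat.mul_le_mul_right (lowExponents n j).card hJ
  rw [e1, add_mul] at h4
  omega

end LocalCoords

/-! ### Comparison of Jacobian ideals -/

/-- The number of exponents grows polynomially, so a shift of the argument does not affect the
leading constant. -/
theorem le_of_growth {n c c' : ℕ} (N : ℕ)
    (h : ∀ j, c * (lowExponents n j).card ≤ c' * (lowExponents n (N + j)).card) : c ≤ c' := by
  by_contra! hcc
  have hpos := card_lowExponents_pos n
  rcases Nat.eq_zero_or_pos c' with rfl | hc'
  · have h1 := (Nat.mul_pos hcc (hpos 0)).trans_le (h 1)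
    simp at h1
  -- `card` would grow at least like `((c' + 1) / c') ^ i` along multiples of `N`
  have hgeom : ∀ i : ℕ, (c' + 1) ^ i ≤ c' ^ i * (lowExponents n (N * i + 1)).card := by
    intro i
    induction i with
    | zero => simpa using hpos 0
    | succ i ih =>
      have h1 := (Nat.mul_le_mul_right (lowExponents n (N * i + 1)).card hcc).trans
        (h (N * i + 1))
      rw [show N * (i + 1) + 1 = N + (N * i + 1) by ring]
      calc (c' + 1) ^ (i + 1) = (c' + 1) ^ i * (c' + 1) := pow_succ _ _
        _ ≤ (c' ^ i * (lowExponents n (N * i + 1)).card) * (c' + 1) := Nat.mul_le_mul_right _ ih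
        _ = c' ^ i * ((c' + 1) * (lowExponents n (N * i + 1)).card) := by ring
        _ ≤ c' ^ i * (c' * (lowExponents n (N + (N * i + 1))).card) := Nat.mul_le_mul_left _ h1
        _ = _ := by ring
  have hc'r : (0 : ℝ) < c' := by exact_mod_cast hc'
  let r : ℝ := (c' + 1) / c'
  have hr : 1 < r := by
    rw [lt_div_iff₀ hc'r]; linarith
  have hbound : ∀ i : ℕ, 1 ≤ i → r ^ i ≤ ((N : ℝ) + 1) ^ n * (i : ℝ) ^ n := by
    intro i hi
    rw [div_pow, div_le_iff₀ (by positivity), ← mul_pow]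
    have h1 := (hgeom i).trans (Nat.mul_le_mul_left _ ((card_lowExponents_le n (N * i + 1)).trans
      (Nat.pow_le_pow_left (show N * i + 1 ≤ (N + 1) * i by nlinarith) n)))
    rw [mul_comm (c' ^ i)] at h1
    exact_mod_cast h1
  have ht := tendsto_pow_const_div_const_pow_of_one_lt n hr
  have hev := ht.eventually (gt_mem_nhds (show (0 : ℝ) < 1 / ((N : ℝ) + 1) ^ n by positivity))
  obtain ⟨i, hi, hi1⟩ := (hev.and (eventually_ge_atTop 1)).exists
  rw [div_lt_div_iff₀ (by positivity) (by positivity)] at hi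
  have := hbound i hi1
  linarith

section

variable {R : Type*} [CommRing R]

theorem pow_sub_pow_mem {a b : R} {m T : Ideal R} (ha : a ∈ T) (hb : b ∈ T) (h : a - b ∈ m * T)
    (N : ℕ) : a ^ (N + 1) - b ^ (N + 1) ∈ m * T ^ (N + 1) := by
  induction N with
  | zero => simpa using h
  | succ N ih =>
    rw [show a ^ (N + 1 + 1) - b ^ (N + 1 + 1) =
      a * (a ^ (N + 1) - b ^ (N + 1)) + (a - b) * b ^ (N + 1) by ring]
    refine Ideal.add_mem _ ?_ ?_
    · have := Ideal.mul_mem_mul ha ih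
      rwa [mul_left_comm, ← pow_succ'] at this
    · have := Ideal.mul_mem_mul h (Ideal.pow_mem_pow hb (N + 1))
      rwa [mul_assoc, ← pow_succ'] at this

theorem sup_span_pow_le (J : Ideal R) (F : R) (N : ℕ) :
    (J ⊔ Ideal.span {F}) ^ (N + 1) ≤ J * (J ⊔ Ideal.span {F}) ^ N ⊔ Ideal.span {F ^ (N + 1)} := by
  induction N with
  | zero => simp
  | succ N ih =>
    rw [pow_succ' _ (N + 1), Ideal.sup_mul]
    refine sup_le le_sup_left ((Ideal.mul_mono_right ih).trans ?_)
    rw [Ideal.mul_sup]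
    refine sup_le_sup ?_ ?_
    · rw [mul_left_comm, pow_succ' _ N]
      exact Ideal.mul_mono_right (Ideal.mul_mono_left le_sup_right)
    · rw [Ideal.span_singleton_mul_span_singleton, ← pow_succ']

theorem pow_add_le_of_pow_succ_le {J T : Ideal R} {N : ℕ} (h : T ^ (N + 1) ≤ J * T ^ N) (j : ℕ) :
    T ^ (N + j) ≤ J ^ j := by
  have h1 : T ^ (N + j) ≤ J ^ j * T ^ N := by
    induction j with
    | zero => simp
    | succ j ih =>
      rw [show N + (j + 1) = (N + j) + 1 by ring, pow_succ']
      refine (Ideal.mul_mono_right ih).trans ?_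
      rw [mul_left_comm, ← pow_succ', pow_succ J, mul_assoc]
      exact Ideal.mul_mono_right h
  exact h1.trans Ideal.mul_le_left

end

namespace LocalCoords

open MvPolynomial IsLocalRing

variable {n : ℕ} {R : Type*} [CommRing R] [Algebra ℂ R] [IsLocalRing R]

/-- The Jacobian ideal `(∂₁F, …, ∂ₙF)`. -/
def jac (S : LocalCoords n R) (F : R) : Ideal R := Ideal.span (Set.range fun i => S.D i F)

/-- The Tjurina ideal `(F, ∂₁F, …, ∂ₙF)`. -/
def tju (S : LocalCoords n R) (F : R) : Ideal R := S.jac F ⊔ Ideal.span {F}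

theorem D_mem_jac (S : LocalCoords n R) (F : R) (i : Fin n) : S.D i F ∈ S.jac F :=
  Ideal.subset_span ⟨i, rfl⟩

theorem self_mem_tju (S : LocalCoords n R) (F : R) : F ∈ S.tju F :=
  Ideal.mem_sup_right (Ideal.mem_span_singleton_self F)

theorem jac_le_tju (S : LocalCoords n R) (F : R) : S.jac F ≤ S.tju F := le_sup_left

theorem fg_tju (S : LocalCoords n R) (F : R) : (S.tju F).FG :=
  Submodule.FG.sup ⟨(Set.finite_range fun i => S.D i F).toFinset, by simp [jac, Ideal.span]⟩
    ⟨{F}, by simp [Ideal.span]⟩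

theorem tju_mul_le (S : LocalCoords n R) (v F : R) : S.tju (v * F) ≤ S.tju F := by
  refine sup_le (Ideal.span_le.2 ?_) ((Ideal.span_singleton_le_iff_mem _).2
    (Ideal.mul_mem_left _ _ (S.self_mem_tju F)))
  rintro _ ⟨i, rfl⟩
  simp only [Derivation.leibniz, smul_eq_mul]
  exact Ideal.add_mem _ (Ideal.mul_mem_left _ _ (S.jac_le_tju F (S.D_mem_jac F i)))
    (Ideal.mul_mem_right _ _ (S.self_mem_tju F))

/-- If the Tjurina ideal `T` of `F` is `𝔪`-primary and `F ∈ 𝔪`, then the Jacobian ideal is a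
reduction of `T`. The polynomial case applies to a Taylor polynomial of `F` of high degree, and
Nakayama's lemma removes the error. -/
theorem exists_tju_pow_succ_le (S : LocalCoords n R) {F : R} (hF : F ∈ maximalIdeal R) {k : ℕ}
    (hk : maximalIdeal R ^ k ≤ S.tju F) : ∃ N, S.tju F ^ (N + 1) ≤ S.jac F * S.tju F ^ N := by
  obtain ⟨q, hq⟩ := S.exists_sub_ev_mem (k + 2) F
  let J := S.jac F
  let T := S.tju F
  have hJT : J ≤ T := S.jac_le_tju F
  have hmT : maximalIdeal R ^ (k + 1) ≤ maximalIdeal R * T := by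
    rw [pow_succ']
    exact Ideal.mul_mono_right hk
  have hsub : F - S.ev q ∈ maximalIdeal R * T :=
    hmT (Ideal.pow_le_pow_right (by omega) hq)
  have hqT : S.ev q ∈ T := by
    have := Ideal.sub_mem _ (S.self_mem_tju F) (Ideal.mul_le_right hsub)
    rwa [sub_sub_cancel] at this
  have hq0 : constantCoeff q = 0 := by
    have h1 : S.ev q ∈ maximalIdeal R ^ 1 := by
      have := Ideal.sub_mem _ hF (Ideal.pow_le_self (by omega) hq)
      rwa [sub_sub_cancel, ← pow_one (maximalIdeal R)] at this
    have h2 := (mem_pow_idealOfVars_iff' 1 _).1 (S.mem_pow_of_ev_mem 1 h1) 0 (by simp)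
    rwa [constantCoeff_eq]
  have hJq : (Ideal.span (Set.range fun i => pderiv i q)).map S.ev ≤ J ⊔ maximalIdeal R * T := by
    rw [Ideal.map_span, Ideal.span_le]
    rintro _ ⟨_, ⟨i, rfl⟩, rfl⟩
    have h1 := hmT (S.D_mem_pow i (k + 1) hq)
    rw [map_sub, S.D_ev] at h1
    have h2 := Ideal.sub_mem (J ⊔ maximalIdeal R * T) (Ideal.mem_sup_left (S.D_mem_jac F i))
      (Ideal.mem_sup_right h1)
    rwa [sub_sub_cancel] at h2
  have hJq' : (Ideal.span (Set.range fun i => pderiv i q)).map S.ev ≤ T :=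
    hJq.trans (sup_le hJT Ideal.mul_le_right)
  obtain ⟨N, hN⟩ := pow_mem_of_constantCoeff_eq_zero q hq0 _ _ rfl rfl
  have hTq : (Ideal.span (Set.range fun i => pderiv i q) ⊔ Ideal.span {q}).map S.ev ≤ T := by
    rw [Ideal.map_sup, Ideal.map_span _ {q}, Set.image_singleton]
    exact sup_le hJq' ((Ideal.span_singleton_le_iff_mem _).2 hqT)
  have hN' := Ideal.mem_map_of_mem S.ev hN
  rw [Ideal.map_sup, Ideal.map_mul, Ideal.map_mul, Ideal.map_pow, Ideal.map_pow,
    S.map_ev_idealOfVars, map_pow] at hN'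
  have hle : J * T ^ N ⊔ maximalIdeal R * T ^ (N + 1) ≥ (J ⊔ maximalIdeal R * T) * T ^ N := by
    rw [Ideal.sup_mul, mul_assoc, ← pow_succ']
  have hFN : F ^ (N + 1) ∈ J * T ^ N ⊔ maximalIdeal R * T ^ (N + 1) := by
    rw [← sub_add_cancel (F ^ (N + 1)) (S.ev q ^ (N + 1))]
    refine Ideal.add_mem _
      (Ideal.mem_sup_right (pow_sub_pow_mem (S.self_mem_tju F) hqT hsub N)) ?_
    refine (sup_le ?_ ?_ : _ ≤ J * T ^ N ⊔ maximalIdeal R * T ^ (N + 1)) hN'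
    · exact le_sup_of_le_right (Ideal.mul_mono_right (Ideal.pow_right_mono hTq _))
    · exact (Ideal.mul_mono hJq (Ideal.pow_right_mono hTq _)).trans hle
  refine ⟨N, Submodule.le_of_le_smul_of_le_jacobson_bot (I := maximalIdeal R)
    (Ideal.FG.pow (S.fg_tju F)) (maximalIdeal_le_jacobson _) ?_⟩
  exact (sup_span_pow_le (S.jac F) F N).trans
    (sup_le le_sup_left ((Ideal.span_singleton_le_iff_mem _).2 hFN))

/-- An ideal of finite colength contains a power of the maximal ideal. -/
theorem exists_pow_le (_S : LocalCoords n R) (J : Ideal R) [FiniteDimensional ℂ (R ⧸ J)] :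
    ∃ k, maximalIdeal R ^ k ≤ J := by
  have hart : IsArtinianRing (R ⧸ J) := IsArtinianRing.of_finite ℂ _
  obtain ⟨k, hk⟩ := IsArtinianRing.isNilpotent_jacobson_bot (R := R ⧸ J)
  refine ⟨k, ?_⟩
  rw [← Ideal.mk_ker (I := J), ← Ideal.map_eq_bot_iff_le_ker, Ideal.map_pow, ← le_bot_iff]
  refine le_trans (Ideal.pow_right_mono ?_ k) hk.le
  rw [Ideal.map_le_iff_le_comap]
  intro x hx
  rw [Ideal.mem_comap, Ideal.mem_jacobson_bot]
  intro y
  obtain ⟨y, rfl⟩ := Ideal.Quotient.mk_surjective y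
  rw [← map_mul, ← map_one (Ideal.Quotient.mk J), ← map_add]
  refine IsUnit.map _ ?_
  by_contra h
  have h1 := Ideal.sub_mem _ ((mem_maximalIdeal _).2 h) (Ideal.mul_mem_right y _ hx)
  rw [add_sub_cancel_left] at h1
  exact (mem_maximalIdeal _).1 h1 isUnit_one

/-- The comparison of multiplicities: since `jac F` is a reduction of `tju F`, the powers of
`jac F'` are contained in slightly lower powers of `jac F`, and both families have colengths growing
like `dim (R ⧸ jac)` times the number of monomials. -/
theorem finrank_jac_le (S : LocalCoords n R) {F F' : R} (hF : F ∈ maximalIdeal R)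
    (hT : S.tju F' = S.tju F)
    [h1 : FiniteDimensional ℂ (R ⧸ S.jac F)] [h2 : FiniteDimensional ℂ (R ⧸ S.jac F')] :
    Module.finrank ℂ (R ⧸ S.jac F) ≤ Module.finrank ℂ (R ⧸ S.jac F') := by
  obtain ⟨K, hK⟩ := S.exists_pow_le (S.jac F)
  obtain ⟨N, hN⟩ := S.exists_tju_pow_succ_le hF (hK.trans (S.jac_le_tju F))
  have key : ∀ j, Module.finrank ℂ (R ⧸ S.jac F) * (lowExponents n j).card ≤
      Module.finrank ℂ (R ⧸ S.jac F') * (lowExponents n (N + j)).card := by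
    intro j
    have hle : S.jac F' ^ (N + j) ≤ S.jac F ^ j :=
      (Ideal.pow_right_mono ((S.jac_le_tju F').trans hT.le) _).trans
        (pow_add_le_of_pow_succ_le hN j)
    obtain ⟨hf, hd⟩ := finrank_quotient_pow_le (S.jac F') _ (S.D_mem_jac F') le_sup_left (N + j)
    obtain ⟨hf', hd'⟩ := finrank_quotient_le_of_le hle
    have : FiniteDimensional ℂ (R ⧸ (Ideal.span (Set.range fun i => S.D i F)) ^ j) := hf'
    exact (S.le_finrank_quotient_span_pow _ hK j).trans (hd'.trans hd)
  exact le_of_growth _ key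

/-- Multiplication by a unit preserves the colength of the Jacobian ideal. -/
theorem finrank_jac_mul (S : LocalCoords n R) {F v : R} (hF : F ∈ maximalIdeal R) (hv : IsUnit v)
    [FiniteDimensional ℂ (R ⧸ S.jac F)] :
    Module.finrank ℂ (R ⧸ S.jac (v * F)) = Module.finrank ℂ (R ⧸ S.jac F) := by
  have hT : S.tju (v * F) = S.tju F := by
    refine le_antisymm (S.tju_mul_le v F) ?_
    obtain ⟨w, hw⟩ := hv.exists_left_inv
    have := S.tju_mul_le w (v * F)
    rwa [← mul_assoc, hw, one_mul] at this
  have hF' : v * F ∈ maximalIdeal R := Ideal.mul_mem_left _ _ hF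
  obtain ⟨K, hK⟩ := S.exists_pow_le (S.jac F)
  have hKT : maximalIdeal R ^ K ≤ S.tju (v * F) := hT ▸ hK.trans (S.jac_le_tju F)
  obtain ⟨N, hN⟩ := S.exists_tju_pow_succ_le hF' hKT
  have hK' : maximalIdeal R ^ (K * (N + 1)) ≤ S.jac (v * F) := by
    rw [pow_mul]
    exact (Ideal.pow_right_mono hKT _).trans (hN.trans Ideal.mul_le_left)
  have := S.finiteDimensional_quotient hK'
  exact le_antisymm (S.finrank_jac_le hF' hT.symm) (S.finrank_jac_le hF hT)

end LocalCoords

/-! ### The ring of germs -/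

section Germs

variable {n : ℕ}

theorem toO_eq_iff {f g : (Fin n → ℂ) → ℂ} {hf : AnalyticAt ℂ f 0} {hg : AnalyticAt ℂ g 0} :
    toO f hf = toO g hg ↔ f =ᶠ[𝓝 0] g := by
  rw [← Filter.Germ.coe_eq]
  exact Subtype.ext_iff

theorem exists_eq_toO (G : holGerms n) : ∃ (f : _) (hf : AnalyticAt ℂ f 0), G = toO f hf := by
  obtain ⟨_, f, hf, rfl⟩ := G
  exact ⟨f, hf, rfl⟩

theorem toO_mul {f g : (Fin n → ℂ) → ℂ} (hf : AnalyticAt ℂ f 0) (hg : AnalyticAt ℂ g 0) :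
    toO f hf * toO g hg = toO (fun z => f z * g z) (hf.mul hg) := rfl

theorem toO_add {f g : (Fin n → ℂ) → ℂ} (hf : AnalyticAt ℂ f 0) (hg : AnalyticAt ℂ g 0) :
    toO f hf + toO g hg = toO (fun z => f z + g z) (hf.add hg) := rfl

theorem toO_const (c : ℂ) : algebraMap ℂ (holGerms n) c = toO (fun _ => c) analyticAt_const := rfl

/-- Evaluation of a holomorphic germ at the origin. -/
def evalZero (n : ℕ) : holGerms n →+* ℂ :=
  (Filter.Germ.valueRingHom (X := Fin n → ℂ) (x := 0)).comp (holGerms n).toSubring.subtype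

theorem evalZero_toO {f : (Fin n → ℂ) → ℂ} (hf : AnalyticAt ℂ f 0) :
    evalZero n (toO f hf) = f 0 := rfl

instance : IsLocalHom (evalZero n) where
  map_nonunit G hG := by
    obtain ⟨f, hf, rfl⟩ := exists_eq_toO G
    rw [evalZero_toO, isUnit_iff_ne_zero] at hG
    refine IsUnit.of_mul_eq_one (toO (fun z => (f z)⁻¹) (hf.inv hG)) ?_
    rw [toO_mul, ← map_one (algebraMap ℂ (holGerms n)), toO_const, toO_eq_iff]
    filter_upwards [hf.continuousAt.eventually_ne hG] with z hz
    exact mul_inv_cancel₀ hz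

instance : IsLocalRing (holGerms n) := RingHom.domain_isLocalRing (evalZero n)

theorem toO_mem_maximalIdeal {f : (Fin n → ℂ) → ℂ} (hf : AnalyticAt ℂ f 0) :
    toO f hf ∈ IsLocalRing.maximalIdeal (holGerms n) ↔ f 0 = 0 := by
  rw [IsLocalRing.mem_maximalIdeal, mem_nonunits_iff, ← isUnit_map_iff (evalZero n), evalZero_toO,
    isUnit_iff_ne_zero, not_not]

theorem analyticAt_coord (i : Fin n) : AnalyticAt ℂ (fun z : Fin n → ℂ => z i) 0 :=
  (ContinuousLinearMap.proj (R := ℂ) (φ := fun _ : Fin n => ℂ) i).analyticAt 0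

/-- Hadamard's lemma: a holomorphic germ vanishing at the origin is a combination of the
coordinates. The coefficients come from shifting the power series by one index. -/
theorem exists_eq_sum_coord {f : (Fin n → ℂ) → ℂ} (hf : AnalyticAt ℂ f 0) (h0 : f 0 = 0) :
    ∃ g : Fin n → (Fin n → ℂ) → ℂ, (∀ i, AnalyticAt ℂ (g i) 0) ∧
      f =ᶠ[𝓝 0] fun z => ∑ i, g i z * z i := by
  obtain ⟨p, r, hp⟩ := hf
  have hrad : 0 < p.shift.radius := by
    rw [p.radius_shift]; exact hp.r_pos.trans_le hp.r_le
  have hs := p.shift.hasFPowerSeriesOnBall hrad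
  refine ⟨fun i z => p.shift.sum z (Pi.single i 1), fun i =>
    (ContinuousLinearMap.apply ℂ ℂ (Pi.single i 1 : Fin n → ℂ)).analyticAt _ |>.comp
      hs.analyticAt, ?_⟩
  filter_upwards [Metric.eball_mem_nhds (0 : Fin n → ℂ) hp.r_pos,
    Metric.eball_mem_nhds (0 : Fin n → ℂ) hrad] with z hz hz'
  have h1 := hp.hasSum hz
  have h2 := (hs.hasSum hz').mapL (ContinuousLinearMap.apply ℂ ℂ z)
  rw [zero_add] at h1 h2
  have h3 := (hasSum_nat_add_iff' 1).2 h1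
  have h4 : p 0 (fun _ => z) = 0 := by
    rw [← h0]; exact hp.coeff_zero _
  have h5 : f z = p.shift.sum z z := by
    have h6 : ∀ k, p (k + 1) (fun _ => z) = p.shift k (fun _ => z) z := by
      intro k
      rw [FormalMultilinearSeries.shift, ContinuousMultilinearMap.curryRight_apply]
      congr 1
      ext i
      refine Fin.lastCases ?_ (fun i => ?_) i <;> simp
    simp only [Finset.sum_range_one, h4, sub_zero, h6] at h3
    exact h3.unique h2
  rw [h5]
  have h7 := congrArg (p.shift.sum z) (pi_eq_sum_univ' z)
  rw [map_sum] at h7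
  refine h7.trans (Finset.sum_congr rfl fun i _ => ?_)
  rw [map_smul, smul_eq_mul, mul_comm]

theorem analyticAt_pd {f : (Fin n → ℂ) → ℂ} (hf : AnalyticAt ℂ f 0) (i : Fin n) :
    AnalyticAt ℂ (fun z => fderiv ℂ f z (Pi.single i 1)) 0 :=
  (ContinuousLinearMap.apply ℂ ℂ (Pi.single i 1 : Fin n → ℂ)).analyticAt _ |>.comp hf.fderiv

/-- The partial derivative of a holomorphic germ, computed on a chosen representative. -/
def pdGerm (i : Fin n) (G : holGerms n) : holGerms n :=
  toO (fun z => fderiv ℂ (exists_eq_toO G).choose z (Pi.single i 1))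
    (analyticAt_pd (exists_eq_toO G).choose_spec.choose i)

theorem pdGerm_toO (i : Fin n) {f : (Fin n → ℂ) → ℂ} (hf : AnalyticAt ℂ f 0) :
    pdGerm i (toO f hf) = toO (fun z => fderiv ℂ f z (Pi.single i 1)) (analyticAt_pd hf i) := by
  rw [pdGerm, toO_eq_iff]
  have h := toO_eq_iff.1 (exists_eq_toO (toO f hf)).choose_spec.choose_spec
  filter_upwards [h.fderiv (𝕜 := ℂ)] with z hz
  rw [hz]

/-- The partial derivatives as derivations of the ring of germs. -/
def pdDer (i : Fin n) : Derivation ℂ (holGerms n) (holGerms n) :=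
  Derivation.mk'
    { toFun := pdGerm i
      map_add' := fun F G => by
        obtain ⟨f, hf, rfl⟩ := exists_eq_toO F
        obtain ⟨g, hg, rfl⟩ := exists_eq_toO G
        rw [toO_add, pdGerm_toO, pdGerm_toO, pdGerm_toO, toO_add, toO_eq_iff]
        filter_upwards [hf.eventually_analyticAt, hg.eventually_analyticAt] with z h1 h2
        rw [fderiv_fun_add h1.differentiableAt h2.differentiableAt]
        rfl
      map_smul' := fun c F => by
        obtain ⟨f, hf, rfl⟩ := exists_eq_toO F
        rw [RingHom.id_apply, Algebra.smul_def, Algebra.smul_def, toO_const, toO_mul, pdGerm_toO,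
          pdGerm_toO, toO_mul, toO_eq_iff]
        filter_upwards [hf.eventually_analyticAt] with z h1
        rw [fderiv_const_mul h1.differentiableAt]
        rfl }
    fun F G => by
      obtain ⟨f, hf, rfl⟩ := exists_eq_toO F
      obtain ⟨g, hg, rfl⟩ := exists_eq_toO G
      change pdGerm i _ = _ • pdGerm i _ + _ • pdGerm i _
      rw [toO_mul, pdGerm_toO, pdGerm_toO, pdGerm_toO, smul_eq_mul, smul_eq_mul, toO_mul, toO_mul,
        toO_add, toO_eq_iff]
      filter_upwards [hf.eventually_analyticAt, hg.eventually_analyticAt] with z h1 h2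
      rw [fderiv_fun_mul h1.differentiableAt h2.differentiableAt]
      rfl

theorem pdDer_toO (i : Fin n) {f : (Fin n → ℂ) → ℂ} (hf : AnalyticAt ℂ f 0) :
    pdDer i (toO f hf) = toO (fun z => fderiv ℂ f z (Pi.single i 1)) (analyticAt_pd hf i) :=
  pdGerm_toO i hf

/-- The standard coordinates on the ring of germs. -/
def germCoords (n : ℕ) : LocalCoords n (holGerms n) where
  x i := toO (fun z => z i) (analyticAt_coord i)
  D := pdDer
  D_x i j := by
    have h : (fun z => fderiv ℂ (fun z : Fin n → ℂ => z j) z (Pi.single i 1)) =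
        fun _ => if i = j then 1 else 0 := by
      ext z
      have h1 : fderiv ℂ (fun z : Fin n → ℂ => z j) z = ContinuousLinearMap.proj j :=
        (ContinuousLinearMap.proj (R := ℂ) (φ := fun _ : Fin n => ℂ) j).hasFDerivAt.fderiv
      rw [h1]
      simp [Pi.single_apply, eq_comm]
    rw [pdDer_toO]
    split_ifs with hij
    · rw [← map_one (algebraMap ℂ (holGerms n)), toO_const, toO_eq_iff, h, if_pos hij]
    · rw [← map_zero (algebraMap ℂ (holGerms n)), toO_const, toO_eq_iff, h, if_neg hij]
  span_x := by
    refine le_antisymm (Ideal.span_le.2 ?_) fun G hG => ?_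
    · rintro _ ⟨i, rfl⟩
      exact (toO_mem_maximalIdeal _).2 rfl
    · obtain ⟨f, hf, rfl⟩ := exists_eq_toO G
      obtain ⟨g, hg, hfg⟩ := exists_eq_sum_coord hf ((toO_mem_maximalIdeal hf).1 hG)
      rw [Ideal.mem_span_range_iff_exists_fun]
      refine ⟨fun i => toO (g i) (hg i), Subtype.ext ?_⟩
      rw [AddSubmonoidClass.coe_finsetSum]
      simp only [toO_mul]
      change ∑ i, Filter.Germ.coeRingHom (𝓝 (0 : Fin n → ℂ)) (fun z => g i z * z i) = _
      rw [← map_sum]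
      refine Filter.Germ.coe_eq.2 ?_
      filter_upwards [hfg] with z hz
      rw [hz, Finset.sum_apply]
  residue G := by
    obtain ⟨f, hf, rfl⟩ := exists_eq_toO G
    refine ⟨f 0, ?_⟩
    exact (toO_mem_maximalIdeal (hf.sub analyticAt_const)).2 (sub_self (f 0))

theorem jacobianIdeal_eq {f : (Fin n → ℂ) → ℂ} (hf : AnalyticAt ℂ f 0) :
    jacobianIdeal n f = (germCoords n).jac (toO f hf) := by
  refine congrArg Ideal.span (Set.ext fun G => exists_congr fun i => ?_)
  change _ ↔ pdDer i (toO f hf) = G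
  rw [pdDer_toO, eq_comm, Subtype.ext_iff]
  rfl

end Germs

/-- Multiplying by a unit of `𝒪₀` does not change the Milnor number:
`μ(u·f) = μ(f)`. -/
theorem milnorNumber_unit_mul (n : ℕ) (u f : (Fin n → ℂ) → ℂ)
    (hu : AnalyticAt ℂ u 0) (hf : AnalyticAt ℂ f 0)
    (huu : IsUnit (toO u hu)) (hf0 : f 0 = 0)
    (hfin : FiniteDimensional ℂ (holGerms n ⧸ jacobianIdeal n f)) :
    milnorNumber n (fun z => u z * f z) = milnorNumber n f := by
  have hfin' : FiniteDimensional ℂ (holGerms n ⧸ (germCoords n).jac (toO f hf)) :=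
    jacobianIdeal_eq hf ▸ hfin
  have huf : jacobianIdeal n (fun z => u z * f z) = (germCoords n).jac (toO u hu * toO f hf) :=
    jacobianIdeal_eq (hu.mul hf)
  rw [milnorNumber, milnorNumber, huf, jacobianIdeal_eq hf]
  exact (germCoords n).finrank_jac_mul ((toO_mem_maximalIdeal hf).2 hf0) huu
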